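/- arXiv:1111.1428 — 2 statements merged into one kernel-verified Lean document; each statement's English description precedes it below -/
import Mathlib

section
/- Fix integers m ≥ 2, s ≥ 5 and d ≥ 2s+2. For every integer r with 2d+2−s ≤ r ≤ 2d+s−7 and r+s ≡ 0 (mod 2), one has σ_{s,r}(X_{m,d}) ≠ ∅. -/
open scoped LinearAlgebra.Projectivization

noncomputable section

/-- The polynomial ring in `m+1` variables over `K`: homogeneous coordinate ring of `ℙ^m`. -/
abbrev PR (K : Type) [Field K] (m : ℕ) : Type := MvPolynomial (Fin (m+1)) K

/-- The space of degree-`d` forms in `m+1` variables. -/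
abbrev Hd (K : Type) [Field K] (m d : ℕ) : Submodule K (PR K m) :=
  MvPolynomial.homogeneousSubmodule (Fin (m+1)) K d

/-- Projective `m`-space over `K`. -/
abbrev Pm (K : Type) [Field K] (m : ℕ) := ℙ K (Fin (m+1) → K)

/-- The target projective space `ℙ^n`, `n = C(m+d,m) - 1`, of the degree-`d` Veronese
embedding, realized as the projectivization of the dual of the space of degree-`d` forms
(the space of degree-`d` symmetric tensors). -/
abbrev PN (K : Type) [Field K] (m d : ℕ) := ℙ K (Module.Dual K (Hd K m d))

variable {K : Type} [Field K] {m : ℕ}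

/-- Hilbert function of `R/I` in degree `t`. -/
def hilbQ (I : Ideal (PR K m)) (t : ℕ) : ℕ :=
  Module.finrank K ((Hd K m t).map (Ideal.Quotient.mkₐ K I).toLinearMap)

/-- The degree (length) of the projective scheme defined by `I`: the eventual value of the
Hilbert function of `R/I`. -/
def idealDeg (I : Ideal (PR K m)) : ℕ := Filter.limsup (fun t => hilbQ I t) Filter.atTop

/-- `h^1(𝓘_Z(d))` for the zero-dimensional scheme `Z` with (saturated) ideal `I`:
it equals `deg Z - dim (R/I)_d`. -/
def h1I (I : Ideal (PR K m)) (d : ℕ) : ℕ := idealDeg I - hilbQ I d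

/-- An ideal is homogeneous. -/
def IsHomogI (I : Ideal (PR K m)) : Prop :=
  ∀ f ∈ I, ∀ n : ℕ, MvPolynomial.homogeneousComponent n f ∈ I

/-- An ideal is saturated with respect to the irrelevant maximal ideal. -/
def IsSatI (I : Ideal (PR K m)) : Prop :=
  ∀ f : PR K m, (∀ i, MvPolynomial.X i * f ∈ I) → f ∈ I

/-- A closed subscheme of `ℙ^m`, given by its saturated homogeneous ideal. -/
structure PSub (K : Type) [Field K] (m : ℕ) where
  I : Ideal (PR K m)
  homog : IsHomogI I
  sat : IsSatI I

/-- A (closed sub)scheme is zero-dimensional iff the Hilbert function of `R/I` is bounded. -/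
def IsZeroDimI (I : Ideal (PR K m)) : Prop := ∃ C, ∀ t, hilbQ I t ≤ C

/-- A polynomial vanishes at a projective point (every homogeneous component vanishes
at a representative). -/
def vanishesAt (f : PR K m) (a : Pm K m) : Prop :=
  ∀ n : ℕ, MvPolynomial.eval a.rep (MvPolynomial.homogeneousComponent n f) = 0

/-- Zero locus of an ideal in `ℙ^m`. -/
def pzeroLocus (I : Ideal (PR K m)) : Set (Pm K m) := {a | ∀ f ∈ I, vanishesAt f a}

/-- The (saturated) homogeneous ideal of a set of points of `ℙ^m`. -/
def idealOfSet (S : Set (Pm K m)) : Ideal (PR K m) :=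
  Ideal.span {f : PR K m | (∃ n, f.IsHomogeneous n) ∧ ∀ a ∈ S, MvPolynomial.eval a.rep f = 0}

/-- Saturation of a homogeneous ideal: the smallest saturated homogeneous ideal containing it. -/
def satIdeal (J : Ideal (PR K m)) : Ideal (PR K m) := sInf {J' | J ≤ J' ∧ IsHomogI J' ∧ IsSatI J'}

/-- The scheme defined by the (saturated) ideal `I` is reduced. -/
def IsReducedI (I : Ideal (PR K m)) : Prop := I = idealOfSet (pzeroLocus I)

/-- Connected component of a zero-dimensional scheme at a point `a`: the largest subscheme
supported at `a`, i.e. the `a`-primary component. -/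
def componentAt (I : Ideal (PR K m)) (a : Pm K m) : Ideal (PR K m) :=
  sInf {J | I ≤ J ∧ IsHomogI J ∧ IsSatI J ∧ pzeroLocus J ⊆ {a}}

/-- Residual scheme of `Z` with respect to the hypersurface `f = 0`: the colon ideal `(I_Z : f)`. -/
def resIdeal (I : Ideal (PR K m)) (f : PR K m) : Ideal (PR K m) :=
  Submodule.colon I (Ideal.span {f})

/-- Degree of the scheme-theoretic intersection of the subschemes defined by `I` and `J`. -/
def interDeg (I J : Ideal (PR K m)) : ℕ := idealDeg (I ⊔ J)

/-- The degree-`d` Veronese image of a vector `v`: the evaluation-at-`v` functional on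
degree-`d` forms. -/
def nu (d : ℕ) (v : Fin (m+1) → K) : Module.Dual K (Hd K m d) :=
  (MvPolynomial.aeval v).toLinearMap ∘ₗ (Hd K m d).subtype

/-- The linear span of the Veronese image `ν_d(S)` of a set `S` of points of `ℙ^m`. -/
def dualSpan (d : ℕ) (S : Set (Pm K m)) : Submodule K (Module.Dual K (Hd K m d)) :=
  Submodule.span K ((fun a => nu d a.rep) '' S)

/-- The linear span `⟨ν_d(Z)⟩` of the Veronese image of the subscheme with ideal `I`:
the annihilator of the degree-`d` part of `I`. -/
def schemeSpanSub (I : Ideal (PR K m)) (d : ℕ) : Submodule K (Module.Dual K (Hd K m d)) where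
  carrier := {φ | ∀ f : Hd K m d, (f : PR K m) ∈ I → φ f = 0}
  add_mem' := by
    intro a b ha hb f hf
    simp [LinearMap.add_apply, ha f hf, hb f hf]
  zero_mem' := by intro f hf; simp
  smul_mem' := by
    intro c a ha f hf
    simp [LinearMap.smul_apply, ha f hf]

/-- `P ∈ ⟨ν_d(Z)⟩`, for `Z` the subscheme with ideal `I`. -/
def inSpanI (I : Ideal (PR K m)) (d : ℕ) (P : PN K m d) : Prop := P.rep ∈ schemeSpanSub I d

/-- `P ∈ ⟨ν_d(S)⟩` for a set `S` of points of `ℙ^m`. -/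
def inSpanSet (d : ℕ) (S : Set (Pm K m)) (P : PN K m d) : Prop := P.rep ∈ dualSpan d S

/-- `L` is a linear subspace of `ℙ^m`. -/
def IsLinearSub (L : Set (Pm K m)) : Prop :=
  ∃ W : Submodule K (Fin (m+1) → K), L = {a | a.submodule ≤ W}

/-- `L` is a line of `ℙ^m`. -/
def IsLine (L : Set (Pm K m)) : Prop :=
  ∃ W : Submodule K (Fin (m+1) → K), Module.finrank K W = 2 ∧ L = {a | a.submodule ≤ W}

/-- `L` is a plane of `ℙ^m`. -/
def IsPlane (L : Set (Pm K m)) : Prop :=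
  ∃ W : Submodule K (Fin (m+1) → K), Module.finrank K W = 3 ∧ L = {a | a.submodule ≤ W}

/-- `J` is the (saturated homogeneous) ideal of a conic of `ℙ^m`: a degree-2 curve contained
in a plane (possibly reducible). -/
def IsConic (J : Ideal (PR K m)) : Prop :=
  ∃ (W : Submodule K (Fin (m+1) → K)) (q : PR K m),
    Module.finrank K W = 3 ∧ q.IsHomogeneous 2 ∧
    q ∉ idealOfSet {a : Pm K m | a.submodule ≤ W} ∧
    J = satIdeal (idealOfSet {a : Pm K m | a.submodule ≤ W} ⊔ Ideal.span {q})

/-- The algebra of polynomial functions on a `K`-vector space. -/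
def polyFunctions (K V : Type) [Field K] [AddCommGroup V] [Module K V] : Subalgebra K (V → K) :=
  Algebra.adjoin K {g : V → K | ∃ φ : V →ₗ[K] K, g = ⇑φ}

/-- Zariski closure of a subset of a projective space. -/
def zClosure {V : Type} [AddCommGroup V] [Module K V] (T : Set (ℙ K V)) : Set (ℙ K V) :=
  {P | ∀ F ∈ polyFunctions K V, (∀ Q ∈ T, ∀ c : K, F (c • Q.rep) = 0) →
    ∀ c : K, F (c • P.rep) = 0}

/-- The Veronese variety `X_{m,d} = ν_d(ℙ^m)` as a subset of `PN K m d`. -/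
def XSet (K : Type) [Field K] (m d : ℕ) : Set (PN K m d) :=
  {Q | ∃ a : Pm K m, Q.submodule = Submodule.span K {nu d a.rep}}

/-- The image `ν_d(S)` of a set of points of `ℙ^m`, as a subset of `PN K m d`. -/
def nuSet (d : ℕ) (S : Set (Pm K m)) : Set (PN K m d) :=
  {Q | ∃ a ∈ S, Q.submodule = Submodule.span K {nu d a.rep}}

/-- The rank of a point `P` of `PN` with respect to a subset `Y ⊆ PN`. -/
def rankWrt {m d : ℕ} (Y : Set (PN K m d)) (P : PN K m d) : ℕ :=
  sInf {r | ∃ S : Finset (PN K m d), ↑S ⊆ Y ∧ S.card = r ∧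
    P.rep ∈ Submodule.span K (Projectivization.rep '' (S : Set (PN K m d)))}

/-- The `s`-th secant variety of `Y ⊆ PN`: the Zariski closure of the union of the spans
of `s` points of `Y`. -/
def secantWrt {m d : ℕ} (Y : Set (PN K m d)) (s : ℕ) : Set (PN K m d) :=
  zClosure {Q | ∃ S : Finset (PN K m d), ↑S ⊆ Y ∧ S.card ≤ s ∧
    Q.rep ∈ Submodule.span K (Projectivization.rep '' (S : Set (PN K m d)))}

/-- The border rank of `P` with respect to `Y ⊆ PN`. -/
def brankWrt {m d : ℕ} (Y : Set (PN K m d)) (P : PN K m d) : ℕ :=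
  sInf {s | 0 < s ∧ P ∈ secantWrt Y s}

/-- Symmetric rank. -/
def srank {m : ℕ} (d : ℕ) (P : PN K m d) : ℕ := rankWrt (XSet K m d) P

/-- Border rank. -/
def brank {m : ℕ} (d : ℕ) (P : PN K m d) : ℕ := brankWrt (XSet K m d) P

/-- Cactus rank: minimal degree of a zero-dimensional closed subscheme `E ⊂ ℙ^m` with
`P ∈ ⟨ν_d(E)⟩`. -/
def crank {m : ℕ} (d : ℕ) (P : PN K m d) : ℕ :=
  sInf {c | ∃ Z : PSub K m, IsZeroDimI Z.I ∧ idealDeg Z.I = c ∧ inSpanI Z.I d P}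

/-- `σ_{s,r}(X_{m,d})`. -/
def sigmaSet (K : Type) [Field K] (m d s r : ℕ) : Set (PN K m d) :=
  {P | brank d P = s ∧ srank d P = r}

/-- A property `Φ` holds for a general `k`-tuple of points of the linear subspace of `ℙ^m`
determined by `W`. -/
def GenerallyOn (W : Submodule K (Fin (m+1) → K)) (k : ℕ)
    (Φ : (Fin k → Pm K m) → Prop) : Prop :=
  ∃ w : Fin 3 → W, Submodule.span K (Set.range fun j => (w j : Fin (m+1) → K)) = W ∧
    ∃ F : MvPolynomial (Fin k × Fin 3) K, F ≠ 0 ∧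
      ∀ c : Fin k → Fin 3 → K,
        MvPolynomial.eval (fun p => c p.1 p.2) F ≠ 0 →
        ∀ e : Fin k → Pm K m,
          (∀ i, (e i).submodule = Submodule.span K {∑ j, c i j • (w j : Fin (m+1) → K)}) → Φ e

end

open MvPolynomial in
theorem nu_smul {m : ℕ} {K : Type} [Field K] (d : ℕ) (c : K) (v : Fin (m+1) → K) :
    nu d (c • v) = c ^ d • nu d v := by
  refine LinearMap.ext fun f => ?_
  have hf : (f : PR K m).IsHomogeneous d := f.2
  simp only [nu, LinearMap.comp_apply, LinearMap.smul_apply, Submodule.subtype_apply,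
    AlgHom.toLinearMap_apply, smul_eq_mul, aeval_def, eval₂_eq', Finset.mul_sum]
  refine Finset.sum_congr rfl fun t ht => ?_
  have h1 := hf (mem_support_iff.mp ht)
  have h2 : ∑ i, t i = d := by
    rw [← h1, Finsupp.weight_apply, Finsupp.sum_fintype] <;> simp
  simp only [Pi.smul_apply, smul_eq_mul, mul_pow, Finset.prod_mul_distrib, Finset.prod_pow_eq_pow_sum, h2]
  ring

theorem nu_apply {m : ℕ} {K : Type} [Field K] (d : ℕ) (v : Fin (m+1) → K) (f : Hd K m d) :
    nu d v f = MvPolynomial.eval v (f : PR K m) := by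
  simp [nu, MvPolynomial.aeval_eq_eval]

theorem nu_ne_zero {m : ℕ} {K : Type} [Field K] (d : ℕ) (v : Fin (m+1) → K) (hv : v ≠ 0) :
    nu d v ≠ 0 := by
  obtain ⟨i, hi⟩ := Function.ne_iff.mp hv
  intro h
  have := LinearMap.congr_fun h ⟨MvPolynomial.X i ^ d, by
    simpa using (MvPolynomial.isHomogeneous_X K i).pow d⟩
  rw [nu_apply] at this
  simp at this
  exact hi this.1

theorem span_singleton_smul_unit' {K V : Type} [Field K] [AddCommGroup V] [Module K V] (c : K)
    (hc : c ≠ 0) (v : V) : Submodule.span K {c • v} = Submodule.span K {v} :=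
  Submodule.span_singleton_smul_eq (IsUnit.mk0 c hc) v

theorem rep_mk_smul {K V : Type} [Field K] [AddCommGroup V] [Module K V] (v : V) (hv : v ≠ 0) :
    ∃ c : K, c ≠ 0 ∧ (Projectivization.mk K v hv).rep = c • v := by
  obtain ⟨a, ha⟩ := Projectivization.exists_smul_eq_mk_rep K v hv
  exact ⟨a, a.ne_zero, ha.symm⟩

theorem mk_mem_XSet {m : ℕ} {K : Type} [Field K] (d : ℕ) (v : Fin (m+1) → K) (hv : v ≠ 0) :
    Projectivization.mk K (nu d v) (nu_ne_zero d v hv) ∈ XSet K m d := by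
  refine ⟨Projectivization.mk K v hv, ?_⟩
  obtain ⟨c, hc, h⟩ := rep_mk_smul (K := K) v hv
  rw [Projectivization.submodule_mk, h, nu_smul, span_singleton_smul_unit' _ (pow_ne_zero _ hc)]

def RankLE {m : ℕ} {K : Type} [Field K] (d : ℕ) (φ : Module.Dual K (Hd K m d)) (n : ℕ) : Prop :=
  ∃ S : Finset (PN K m d), ↑S ⊆ XSet K m d ∧ S.card ≤ n ∧
    φ ∈ Submodule.span K (Projectivization.rep '' (S : Set (PN K m d)))

theorem rankLE_of_family {m : ℕ} {K : Type} [Field K] (d : ℕ) (φ : Module.Dual K (Hd K m d))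
    {ι : Type} [Fintype ι] (c : ι → K) (v : ι → Fin (m+1) → K) (hv : ∀ i, v i ≠ 0)
    (h : φ = ∑ i, c i • nu d (v i)) : RankLE d φ (Fintype.card ι) := by
  classical
  refine ⟨Finset.univ.image fun i => Projectivization.mk K (nu d (v i)) (nu_ne_zero d _ (hv i)),
    ?_, Finset.card_image_le, ?_⟩
  · intro Q hQ
    simp only [Finset.coe_image, Finset.coe_univ, Set.image_univ, Set.mem_range] at hQ
    obtain ⟨i, rfl⟩ := hQ
    exact mk_mem_XSet d _ (hv i)
  · rw [h]
    refine Submodule.sum_mem _ fun i _ => Submodule.smul_mem _ _ ?_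
    obtain ⟨a, ha, hh⟩ := rep_mk_smul (K := K) (nu d (v i)) (nu_ne_zero d _ (hv i))
    have : nu d (v i) = a⁻¹ • (Projectivization.mk K (nu d (v i)) (nu_ne_zero d _ (hv i))).rep := by
      rw [hh, smul_smul, inv_mul_cancel₀ ha, one_smul]
    rw [this]
    refine Submodule.smul_mem _ _ (Submodule.subset_span ⟨_, ?_, rfl⟩)
    simp

theorem family_of_span {m : ℕ} {K : Type} [Field K] (d : ℕ) (φ : Module.Dual K (Hd K m d))
    (S : Finset (PN K m d)) (hS : ↑S ⊆ XSet K m d)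
    (h : φ ∈ Submodule.span K (Projectivization.rep '' (S : Set (PN K m d)))) :
    ∃ (c : S → K) (v : S → Fin (m+1) → K), φ = ∑ i, c i • nu d (v i) := by
  rw [Submodule.mem_span_image_finset_iff_exists_fun] at h
  obtain ⟨c, hc⟩ := h
  have key : ∀ Q : S, ∃ (a : K) (v : Fin (m+1) → K), (Q : PN K m d).rep = a • nu d v := by
    intro Q
    obtain ⟨a, ha⟩ := hS Q.2
    have h1 : (Q : PN K m d).rep ∈ (Q : PN K m d).submodule := by
      rw [Projectivization.submodule_eq]; exact Submodule.mem_span_singleton_self _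
    rw [ha, Submodule.mem_span_singleton] at h1
    obtain ⟨x, hx⟩ := h1
    exact ⟨x, _, hx.symm⟩
  choose a v hav using key
  refine ⟨fun i => c i * a i, v, ?_⟩
  rw [← hc]
  refine Finset.sum_congr rfl fun i _ => ?_
  rw [hav, smul_smul]

/-- srank criterion -/
theorem srank_mk {m : ℕ} {K : Type} [Field K] (d r : ℕ) (φ : Module.Dual K (Hd K m d))
    (hφ : φ ≠ 0) (h1 : RankLE d φ r)
    (h2 : ∀ (ι : Type) [Fintype ι] (c : ι → K) (v : ι → Fin (m+1) → K),
      φ = ∑ i, c i • nu d (v i) → r ≤ Fintype.card ι) :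
    srank d (Projectivization.mk K φ hφ) = r := by
  obtain ⟨a, ha, hrep⟩ := rep_mk_smul (K := K) φ hφ
  have lower : ∀ S : Finset (PN K m d), ↑S ⊆ XSet K m d →
      φ ∈ Submodule.span K (Projectivization.rep '' (S : Set (PN K m d))) → r ≤ S.card := by
    intro S hS hm
    obtain ⟨c, v, h⟩ := family_of_span d φ S hS hm
    simpa using h2 S c v h
  have hmem : ∀ S : Finset (PN K m d), (Projectivization.mk K φ hφ).rep ∈
      Submodule.span K (Projectivization.rep '' (S : Set (PN K m d))) ↔
      φ ∈ Submodule.span K (Projectivization.rep '' (S : Set (PN K m d))) := by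
    intro S
    rw [hrep]
    exact Submodule.smul_mem_iff _ ha
  obtain ⟨S, hS, hc, hm⟩ := h1
  have hc' : S.card = r := le_antisymm hc (lower S hS hm)
  unfold srank rankWrt
  apply le_antisymm
  · exact Nat.sInf_le ⟨S, hS, hc', (hmem S).2 hm⟩
  · refine le_csInf ⟨r, S, hS, hc', (hmem S).2 hm⟩ ?_
    rintro n ⟨S', hS', rfl, hm'⟩
    exact lower S' hS' ((hmem S').1 hm')

theorem polyFunctions_curve {K V : Type} [Field K] [AddCommGroup V] [Module K V]
    (G : V → K) (hG : G ∈ polyFunctions K V) {ι : Type} (s : Finset ι) (e : ι → ℕ) (w : ι → V) :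
    ∃ p : Polynomial K, ∀ x : K, G (∑ i ∈ s, x ^ e i • w i) = p.eval x := by
  induction hG using Algebra.adjoin_induction with
  | mem g hg =>
    obtain ⟨φ, rfl⟩ := hg
    refine ⟨∑ i ∈ s, Polynomial.X ^ e i * Polynomial.C (φ (w i)), fun x => ?_⟩
    simp only [map_sum, map_smul, smul_eq_mul, Polynomial.eval_finsetSum, Polynomial.eval_mul,
      Polynomial.eval_pow, Polynomial.eval_X, Polynomial.eval_C]
  | algebraMap r => exact ⟨Polynomial.C r, fun x => by simp⟩
  | add f g _ _ hf hg =>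
    obtain ⟨p, hp⟩ := hf
    obtain ⟨q, hq⟩ := hg
    exact ⟨p + q, fun x => by simp [hp, hq]⟩
  | mul f g _ _ hf hg =>
    obtain ⟨p, hp⟩ := hf
    obtain ⟨q, hq⟩ := hg
    exact ⟨p * q, fun x => by simp [hp, hq]⟩

theorem brank_mk {m : ℕ} {K : Type} [Field K] [CharZero K] (d s : ℕ) (hs : 0 < s)
    (φ : Module.Dual K (Hd K m d)) (hφ : φ ≠ 0)
    {ι : Type} (t : Finset ι) (e : ι → ℕ) (w : ι → Module.Dual K (Hd K m d))
    (h0 : ∑ i ∈ t, (0:K) ^ e i • w i = φ)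
    (h1 : ∀ x : K, x ≠ 0 → RankLE d (∑ i ∈ t, x ^ e i • w i) s)
    {κ : Type} [Fintype κ] [DecidableEq κ] (M : κ → κ → Hd K m d)
    (h2 : (Matrix.of fun i j => φ (M i j)).det ≠ 0)
    (h3 : ∀ (τ : Type) [Fintype τ] (c : τ → K) (v : τ → Fin (m+1) → K), Fintype.card τ < s →
      (Matrix.of fun i j => (∑ l, c l • nu d (v l)) (M i j)).det = 0) :
    brank d (Projectivization.mk K φ hφ) = s := by
  obtain ⟨a, ha, hrep⟩ := rep_mk_smul (K := K) φ hφ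
  have mem : Projectivization.mk K φ hφ ∈ secantWrt (XSet K m d) s := by
    intro G hG hv c
    have hz : G 0 = 0 := by
      have := hv (Projectivization.mk K _ (nu_ne_zero d (fun _ => (1:K)) (by
        intro h; simpa using congrFun h 0))) (by
          refine ⟨{Projectivization.mk K _ (nu_ne_zero d (fun _ => (1:K)) (by
            intro h; simpa using congrFun h 0))}, ?_, by rw [Finset.card_singleton]; exact hs, ?_⟩
          · simp only [Finset.coe_singleton, Set.singleton_subset_iff]
            refine mk_mem_XSet d _ ?_
            intro h; simpa using congrFun h 0
          · exact Submodule.subset_span (by simp)) 0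
      simpa using this
    have key : ∀ ψ, RankLE d ψ s → ∀ c : K, G (c • ψ) = 0 := by
      intro ψ hψ c
      by_cases h : ψ = 0
      · simpa [h] using hz
      obtain ⟨b, hb, hr⟩ := rep_mk_smul (K := K) ψ h
      have := hv (Projectivization.mk K ψ h) (by
        obtain ⟨S, hS, hc, hm⟩ := hψ
        refine ⟨S, hS, hc, ?_⟩
        rw [hr]
        exact Submodule.smul_mem _ _ hm) (c * b⁻¹)
      rwa [hr, smul_smul, mul_assoc, inv_mul_cancel₀ hb, mul_one] at this
    obtain ⟨p, hp⟩ := polyFunctions_curve G hG t e (fun i => (c * a) • w i)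
    have hp' : ∀ x : K, G ((c * a) • ∑ i ∈ t, x ^ e i • w i) = p.eval x := by
      intro x
      rw [← hp, Finset.smul_sum]
      congr 1
      exact Finset.sum_congr rfl fun i _ => smul_comm _ _ _
    have hp0 : p = 0 := by
      apply Polynomial.eq_zero_of_infinite_isRoot
      refine Set.Infinite.mono (s := {0}ᶜ) ?_ (Set.finite_singleton 0).infinite_compl
      intro x hx
      simp only [Set.mem_ofPred_eq, Polynomial.IsRoot.def]
      rw [← hp', key _ (h1 x hx)]
    rw [hrep, smul_smul, ← h0, hp', hp0, Polynomial.eval_zero]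
  unfold brank brankWrt
  apply le_antisymm
  · exact Nat.sInf_le ⟨hs, mem⟩
  refine le_csInf ⟨s, hs, mem⟩ ?_
  rintro s' ⟨hs', hm⟩
  by_contra hlt
  push Not at hlt
  let G : Module.Dual K (Hd K m d) → K := fun ψ => (Matrix.of fun i j => ψ (M i j)).det
  have hG : G ∈ polyFunctions K (Module.Dual K (Hd K m d)) := by
    have : G = ∑ σ : Equiv.Perm κ, ((Equiv.Perm.sign σ : ℤ) : K) •
        ∏ i, (fun ψ : Module.Dual K (Hd K m d) => ψ (M (σ i) i)) := by
      funext ψ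
      simp only [G, Matrix.det_apply', Finset.sum_apply, Pi.smul_apply, Finset.prod_apply,
        smul_eq_mul, Matrix.of_apply]
    rw [this]
    refine Subalgebra.sum_mem _ fun σ _ => Subalgebra.smul_mem _ (Subalgebra.prod_mem _ fun i _ => ?_) _
    exact Algebra.subset_adjoin ⟨LinearMap.applyₗ (M (σ i) i), rfl⟩
  have := hm G hG (by
    rintro Q ⟨S, hS, hc, hQ⟩ c
    obtain ⟨c', v, h⟩ := family_of_span d _ S hS (Submodule.smul_mem _ c hQ)
    simp only [G, h]
    exact h3 S c' v (by simpa using lt_of_le_of_lt hc hlt)) a⁻¹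
  rw [hrep, smul_smul, inv_mul_cancel₀ ha, one_smul] at this
  exact h2 this
noncomputable def cvv {m : ℕ} {K : Type} [Field K] (i0 i1 i2 : Fin (m+1)) : Fin (m+1) → Polynomial K :=
  fun i => if i = i0 then 1 else if i = i1 then Polynomial.X else
    if i = i2 then Polynomial.X ^ 2 else 0

def pvv {m : ℕ} {K : Type} [Field K] (i0 i1 : Fin (m+1)) (y : K) : Fin (m+1) → K :=
  fun i => if i = i0 then 1 else if i = i1 then y else 0

noncomputable def HH {m : ℕ} {K : Type} [Field K] (i0 i1 : Fin (m+1)) (e : ℕ) (p : Polynomial K) : PR K m :=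
  ∑ n ∈ Finset.range (e+1), MvPolynomial.C (p.coeff n) *
    (MvPolynomial.X i0 ^ (e - n) * MvPolynomial.X i1 ^ n)

noncomputable def CC {m : ℕ} {K : Type} [Field K] (i0 i1 i2 : Fin (m+1)) (d n : ℕ) : Module.Dual K (Hd K m d) :=
  (Polynomial.lcoeff K n) ∘ₗ (MvPolynomial.aeval (cvv (K := K) i0 i1 i2)).toLinearMap ∘ₗ (Hd K m d).subtype

noncomputable def FF {m : ℕ} {K : Type} [Field K] (i0 i1 i2 : Fin (m+1)) (d n : ℕ) {k : ℕ} (y : Fin k → K) :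
    Module.Dual K (Hd K m d) :=
  CC i0 i1 i2 d n + ∑ j, nu d (pvv i0 i1 (y j))

section
variable {m : ℕ} {K : Type} [Field K] {i0 i1 i2 : Fin (m+1)}

theorem CC_apply (d n : ℕ) (f : Hd K m d) :
    CC i0 i1 i2 d n f = (MvPolynomial.aeval (cvv (K := K) i0 i1 i2) (f : PR K m)).coeff n := rfl

theorem FF_apply (d n : ℕ) {k : ℕ} (y : Fin k → K) (f : Hd K m d) :
    FF i0 i1 i2 d n y f = (MvPolynomial.aeval (cvv (K := K) i0 i1 i2) (f : PR K m)).coeff n +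
      ∑ j, MvPolynomial.eval (pvv i0 i1 (y j)) (f : PR K m) := by
  simp [FF, CC_apply, nu_apply]

theorem HH_hom (e : ℕ) (p : Polynomial K) : (HH i0 i1 e p : PR K m).IsHomogeneous e := by
  refine MvPolynomial.IsHomogeneous.sum _ _ _ fun n hn => ?_
  have hn' : n ≤ e := by simpa [Nat.lt_succ_iff] using hn
  have := (MvPolynomial.isHomogeneous_C (Fin (m+1)) (p.coeff n)).mul
    (((MvPolynomial.isHomogeneous_X K i0).pow (e-n)).mul ((MvPolynomial.isHomogeneous_X K i1).pow n))
  convert this using 1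
  omega

theorem eval_HH (e : ℕ) (p : Polynomial K) (v : Fin (m+1) → K) :
    MvPolynomial.eval v (HH i0 i1 e p : PR K m) =
      ∑ n ∈ Finset.range (e+1), p.coeff n * (v i0 ^ (e - n) * v i1 ^ n) := by
  simp [HH]

theorem aeval_HH (h01 : i0 ≠ i1) (e : ℕ) (p : Polynomial K) (hp : p.natDegree ≤ e) :
    MvPolynomial.aeval (cvv (K := K) i0 i1 i2) (HH i0 i1 e p : PR K m) = p := by
  conv_rhs => rw [p.as_sum_range' (e+1) (by omega)]
  simp [HH, cvv, h01.symm, ← Polynomial.C_mul_X_pow_eq_monomial, Polynomial.algebraMap_eq]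

theorem eval_pvv_HH (h01 : i0 ≠ i1) (e : ℕ) (p : Polynomial K) (hp : p.natDegree ≤ e) (y : K) :
    MvPolynomial.eval (pvv i0 i1 y) (HH i0 i1 e p : PR K m) = p.eval y := by
  rw [eval_HH, Polynomial.eval_eq_sum_range' (n := e+1) (by omega)]
  simp [pvv, h01.symm]

theorem eval_HH_zero (e : ℕ) (p : Polynomial K) (hp : p.natDegree < e) (v : Fin (m+1) → K)
    (hv : v i0 = 0) : MvPolynomial.eval v (HH i0 i1 e p : PR K m) = 0 := by
  rw [eval_HH]
  refine Finset.sum_eq_zero fun n hn => ?_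
  have hn' : n ≤ e := by simpa [Nat.lt_succ_iff] using hn
  rcases hn'.eq_or_lt with rfl | h
  · rw [Polynomial.coeff_eq_zero_of_natDegree_lt hp, zero_mul]
  · rw [hv, zero_pow (by omega)]; ring

theorem eval_HH_root (e : ℕ) (p : Polynomial K) (hp : p.natDegree ≤ e) (v : Fin (m+1) → K)
    (hv : v i0 ≠ 0) (hr : p.eval (v i1 / v i0) = 0) :
    MvPolynomial.eval v (HH i0 i1 e p : PR K m) = 0 := by
  have : MvPolynomial.eval v (HH i0 i1 e p : PR K m) = v i0 ^ e * p.eval (v i1 / v i0) := by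
    rw [eval_HH, Polynomial.eval_eq_sum_range' (n := e+1) (by omega), Finset.mul_sum]
    refine Finset.sum_congr rfl fun n hn => ?_
    have hn' : n ≤ e := by simpa [Nat.lt_succ_iff] using hn
    obtain ⟨t, rfl⟩ := Nat.exists_eq_add_of_le hn'
    rw [Nat.add_sub_cancel_left, pow_add, div_pow]
    field_simp
  rw [this, hr, mul_zero]

theorem natDegree_cvv (d : ℕ) (f : Hd K m d) :
    (MvPolynomial.aeval (cvv (K := K) i0 i1 i2) (f : PR K m)).natDegree ≤ 2 * d := by
  rw [mul_comm]
  refine MvPolynomial.aeval_natDegree_le _ (MvPolynomial.IsHomogeneous.totalDegree_le f.2) _ ?_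
  intro i
  unfold cvv
  split_ifs <;> simp

theorem eval_cvv (x : K) (f : PR K m) :
    MvPolynomial.eval (fun i => (cvv (K := K) i0 i1 i2 i).eval x) f =
      (MvPolynomial.aeval (cvv (K := K) i0 i1 i2) f).eval x := by
  induction f using MvPolynomial.induction_on with
  | C a => simp [Polynomial.algebraMap_eq]
  | add p q hp hq => simp [hp, hq]
  | mul_X p i hp => simp [hp]

theorem root_sum {N : ℕ} {ω : K} (hω : IsPrimitiveRoot ω N) (n : ℕ) :
    ∑ j ∈ Finset.range N, (ω ^ j) ^ n = if N ∣ n then (N : K) else 0 := by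
  have : ∀ j, (ω ^ j) ^ n = (ω ^ n) ^ j := fun j => by rw [← pow_mul, ← pow_mul, mul_comm]
  simp only [this]
  split_ifs with h
  · rw [(hω.pow_eq_one_iff_dvd n).2 h]; simp
  · rw [geom_sum_eq (fun h' => h ((hω.pow_eq_one_iff_dvd n).1 h')), ← pow_mul, mul_comm n, pow_mul,
      hω.pow_eq_one]; simp

theorem root_nu {N : ℕ} {ω : K} (hω : IsPrimitiveRoot ω N) (d e : ℕ) (x : K) :
    ∑ j : Fin N, ((ω ^ (j:ℕ)) ^ e) • nu d (fun i => (cvv (m := m) i0 i1 i2 i).eval (x * ω ^ (j:ℕ))) =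
      ∑ n ∈ (Finset.range (2*d+1)).filter (fun n => N ∣ n + e),
        (N * x ^ n : K) • CC i0 i1 i2 d n := by
  refine LinearMap.ext fun f => ?_
  simp only [LinearMap.sum_apply, LinearMap.smul_apply, nu_apply, eval_cvv, CC_apply, smul_eq_mul]
  rw [Fin.sum_univ_eq_sum_range (fun j => (ω ^ j) ^ e *
    (MvPolynomial.aeval (cvv (K := K) i0 i1 i2) (f : PR K m)).eval (x * ω ^ j)) N]
  set p := MvPolynomial.aeval (cvv (K := K) i0 i1 i2) (f : PR K m) with hp
  have hd : p.natDegree < 2 * d + 1 := Nat.lt_succ_of_le (natDegree_cvv d f)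
  simp only [Polynomial.eval_eq_sum_range' hd, Finset.mul_sum]
  rw [Finset.sum_comm, Finset.sum_filter]
  refine Finset.sum_congr rfl fun n _ => ?_
  have := root_sum hω (n + e)
  calc _ = (p.coeff n * x ^ n) * ∑ j ∈ Finset.range N, (ω ^ j) ^ (n + e) := by
        rw [Finset.mul_sum]
        refine Finset.sum_congr rfl fun j _ => ?_
        rw [mul_pow, pow_add]; ring
    _ = _ := by
        rw [this]; split_ifs <;> ring

theorem cvv_ne (x : K) : (fun i => (cvv (m := m) i0 i1 i2 i).eval x) ≠ 0 := by
  intro h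
  simpa [cvv] using congrFun h i0

theorem pvv_ne (x : K) : pvv (m := m) i0 i1 x ≠ 0 := by
  intro h
  simpa [pvv] using congrFun h i0

theorem rankLE_aux (d : ℕ) {N k : ℕ} (c : Fin N → K) (x : Fin N → K) (y : Fin k → K) (φ)
    (h : φ = ∑ j, c j • nu d (fun i => (cvv (m := m) i0 i1 i2 i).eval (x j))) :
    RankLE d (φ + ∑ j, nu d (pvv i0 i1 (y j))) (N + k) := by
  have := rankLE_of_family d (φ + ∑ j, nu d (pvv i0 i1 (y j)))
    (Sum.elim c (fun _ : Fin k => (1:K)))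
    (Sum.elim (fun j i => (cvv (m := m) i0 i1 i2 i).eval (x j)) (fun j => pvv i0 i1 (y j))) (by
      rintro (j | j)
      · exact cvv_ne _
      · exact pvv_ne _) (by simp [h])
  simpa using this

theorem FF_upper [IsAlgClosed K] [CharZero K] (d b : ℕ) (hb : 1 ≤ b) (hbd : b ≤ d) {k : ℕ}
    (y : Fin k → K) : RankLE d (FF (m := m) i0 i1 i2 d (b-1) y) (2 * d + 2 - b + k) := by
  set N := 2 * d + 2 - b with hN
  have : NeZero N := ⟨by omega⟩
  obtain ⟨ω, hω⟩ := HasEnoughRootsOfUnity.exists_primitiveRoot K N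
  have hN0 : (N : K) ≠ 0 := NeZero.ne _
  have h := root_nu (m := m) (i0 := i0) (i1 := i1) (i2 := i2) hω d (N - (b-1)) 1
  have hf : (Finset.range (2*d+1)).filter (fun n => N ∣ n + (N - (b-1))) = {b-1} := by
    ext n
    simp only [Finset.mem_filter, Finset.mem_range, Finset.mem_singleton]
    constructor
    · rintro ⟨h1, q, hq⟩
      have : q = 1 := by
        have h2 : 0 < q := by
          rcases Nat.eq_zero_or_pos q with rfl | h
          · omega
          · exact h
        have h3 : q < 2 := by
          by_contra h3
          push Not at h3
          have := Nat.mul_le_mul_left N h3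
          omega
        omega
      subst this
      omega
    · rintro rfl
      exact ⟨by omega, ⟨1, by omega⟩⟩
  rw [hf, Finset.sum_singleton, one_pow, mul_one] at h
  refine rankLE_aux (i2 := i2) d (fun j => (N:K)⁻¹ * (ω ^ (j:ℕ)) ^ (N - (b-1))) (fun j => 1 * ω ^ (j:ℕ)) y _ ?_
  simp only [mul_smul, ← Finset.smul_sum]
  rw [h, smul_smul, inv_mul_cancel₀ hN0, one_smul]

theorem FF_curve [IsAlgClosed K] [CharZero K] (d b : ℕ) (hb : 1 ≤ b) {k : ℕ}
    (y : Fin k → K) (x : K) (hx : x ≠ 0) :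
    RankLE d (∑ n ∈ (Finset.range (2*d+1)).filter (fun n => b ∣ n + 1), x ^ (n + 1 - b) •
      CC (m := m) i0 i1 i2 d n + ∑ j, nu d (pvv i0 i1 (y j))) (b + k) := by
  have : NeZero b := ⟨by omega⟩
  obtain ⟨ω, hω⟩ := HasEnoughRootsOfUnity.exists_primitiveRoot K b
  have hN0 : (b : K) ≠ 0 := NeZero.ne _
  have h := root_nu (m := m) (i0 := i0) (i1 := i1) (i2 := i2) hω d 1 x
  refine rankLE_aux (i2 := i2) d (fun j => ((b:K)⁻¹ * (x ^ (b-1))⁻¹) * (ω ^ (j:ℕ)) ^ 1) (fun j => x * ω ^ (j:ℕ)) y _ ?_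
  simp only [mul_smul _ ((ω ^ _) ^ 1), ← Finset.smul_sum]
  rw [h, Finset.smul_sum]
  refine Finset.sum_congr rfl fun n hn => ?_
  have h1 : b ≤ n + 1 := Nat.le_of_dvd (by omega) (Finset.mem_filter.1 hn).2
  obtain ⟨t, ht⟩ := Nat.exists_eq_add_of_le h1
  have h2 : n = t + (b-1) := by omega
  rw [smul_smul, show n + 1 - b = t by omega, h2, pow_add]
  congr 1
  have := pow_ne_zero (b-1) hx
  field_simp

theorem det_zero_of_card {κ τ : Type} [Fintype κ] [DecidableEq κ] [Fintype τ]
    (A : Matrix κ τ K) (B : Matrix τ κ K) (h : Fintype.card τ < Fintype.card κ) :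
    (A * B).det = 0 := by
  by_contra hne
  have h1 := Matrix.rank_of_isUnit (A * B) ((Matrix.isUnit_iff_isUnit_det _).2 (IsUnit.mk0 _ hne))
  have h2 := Matrix.rank_mul_le_left A B
  have h3 := Matrix.rank_le_card_width A
  omega

end
section
variable {m : ℕ} {K : Type} [Field K] {i0 i1 i2 : Fin (m+1)}

theorem FF_HH (h01 : i0 ≠ i1) (d n : ℕ) {k : ℕ} (y : Fin k → K) (e : ℕ) (p q : Polynomial K)
    (hp : p.natDegree ≤ e) (hq : q.natDegree ≤ d - e)
    (hm : HH i0 i1 e p * HH i0 i1 (d - e) q ∈ Hd K m d) :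
    FF i0 i1 i2 d n y ⟨_, hm⟩ = (p * q).coeff n + ∑ j, p.eval (y j) * q.eval (y j) := by
  rw [FF_apply]
  simp only [map_mul, aeval_HH h01 _ _ hp, aeval_HH h01 _ _ hq, eval_pvv_HH h01 _ _ hp,
    eval_pvv_HH h01 _ _ hq]

theorem FF_det (h01 : i0 ≠ i1) (d b : ℕ) {k : ℕ} (hb : 1 ≤ b) (hd : 2 * (b + k) ≤ d)
    (y : Fin k → K) (hy : Function.Injective y) (hy0 : ∀ j, y j ≠ 0) :
    ∃ (M : Fin b ⊕ Fin k → Fin b ⊕ Fin k → Hd K m d),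
      (Matrix.of fun i j => FF i0 i1 i2 d (b-1) y (M i j)).det ≠ 0 ∧
      ∀ (τ : Type) [Fintype τ] (c : τ → K) (v : τ → Fin (m+1) → K), Fintype.card τ < b + k →
      (Matrix.of fun i j => (∑ l, c l • nu d (v l)) (M i j)).det = 0 := by
  classical
  let w : Polynomial K := ∏ l, (Polynomial.X - Polynomial.C (y l))
  let w' : Fin k → Polynomial K := fun i =>
    Polynomial.X ^ b * ∏ l ∈ Finset.univ.erase i, (Polynomial.X - Polynomial.C (y l))
  have hw : w.natDegree = k := by simp [w, Polynomial.natDegree_prod_of_monic, Polynomial.monic_X_sub_C]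
  have hw' : ∀ i, (w' i).natDegree ≤ b + k - 1 := by
    intro i
    refine Polynomial.natDegree_mul_le.trans ?_
    have hk : 0 < k := Fin.pos i
    rw [Polynomial.natDegree_prod_of_monic _ _ fun l _ => Polynomial.monic_X_sub_C _]
    simp
    omega
  have hw0 : ∀ l, w.eval (y l) = 0 := by
    intro l
    simp only [w, Polynomial.eval_prod]
    exact Finset.prod_eq_zero (Finset.mem_univ l) (by simp)
  have hw'0 : ∀ i l, l ≠ i → (w' i).eval (y l) = 0 := by
    intro i l hl
    simp only [w', Polynomial.eval_mul, Polynomial.eval_prod]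
    rw [Finset.prod_eq_zero (i := l) (by simp [hl]) (by simp), mul_zero]
  have hw'1 : ∀ i, (w' i).eval (y i) ≠ 0 := by
    intro i
    simp only [w', Polynomial.eval_mul, Polynomial.eval_prod]
    refine mul_ne_zero (by simp [hy0]) (Finset.prod_ne_zero_iff.2 fun l hl => ?_)
    have : l ≠ i := by simpa using hl
    simpa [sub_eq_zero] using fun h => this (hy h).symm
  have hwc : w.coeff 0 ≠ 0 := by
    rw [Polynomial.coeff_zero_eq_eval_zero]
    simp only [w, Polynomial.eval_prod]
    refine (Finset.prod_ne_zero_iff.2 fun l hl => ?_)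
    simpa using hy0 l
  let f : Fin b ⊕ Fin k → Polynomial K := Sum.elim (fun i => Polynomial.X ^ (i:ℕ) * w) w'
  let g : Fin b ⊕ Fin k → Polynomial K := Sum.elim (fun j => Polynomial.X ^ (b - 1 - (j:ℕ))) w'
  have hf : ∀ i, (f i).natDegree ≤ b + k - 1 := by
    rintro (i | i)
    · refine Polynomial.natDegree_mul_le.trans ?_
      have := i.2
      simp [hw]; omega
    · exact hw' i
  have hg : ∀ i, (g i).natDegree ≤ d - (b + k - 1) := by
    rintro (i | i)
    · simp [g]; omega
    · exact (hw' i).trans (by omega)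
  have hM : ∀ i j, (HH i0 i1 (b+k-1) (f i) * HH i0 i1 (d - (b+k-1)) (g j)) ∈ Hd K m d := by
    intro i j
    have := (HH_hom (m := m) (i0 := i0) (i1 := i1) (b+k-1) (f i)).mul
      (HH_hom (m := m) (i0 := i0) (i1 := i1) (d - (b+k-1)) (g j))
    rw [show b + k - 1 + (d - (b+k-1)) = d by omega] at this
    exact this
  refine ⟨fun i j => ⟨_, hM i j⟩, ?_, ?_⟩
  · have : (Matrix.of fun i j => FF i0 i1 i2 d (b-1) y ⟨_, hM i j⟩) =
        Matrix.fromBlocks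
          (Matrix.of fun i j : Fin b => (Polynomial.X ^ (i:ℕ) * w * Polynomial.X ^ (b - 1 - (j:ℕ))).coeff (b-1))
          0 (Matrix.of fun i j => FF i0 i1 i2 d (b-1) y ⟨_, hM (Sum.inr i) (Sum.inl j)⟩)
          (Matrix.diagonal fun i => (w' i).eval (y i) * (w' i).eval (y i)) := by
      ext i j
      rw [Matrix.of_apply]
      rcases i with i | i <;> rcases j with j | j
      · rw [FF_HH h01 _ _ _ _ _ _ (hf _) (hg _)]
        simp [f, g, hw0]
      · rw [FF_HH h01 _ _ _ _ _ _ (hf _) (hg _)]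
        simp only [f, g, Sum.elim_inl, Sum.elim_inr, Matrix.fromBlocks_apply₁₂, Polynomial.eval_mul,
          hw0, mul_zero, zero_mul, Finset.sum_const_zero, add_zero, Matrix.zero_apply, w']
        rw [mul_left_comm, Polynomial.coeff_X_pow_mul', if_neg (by omega)]
      · simp
      · rw [FF_HH h01 _ _ _ _ _ _ (hf _) (hg _)]
        simp only [f, g, Sum.elim_inr, Matrix.fromBlocks_apply₂₂]
        have h1 : (w' i * w' j).coeff (b-1) = 0 := by
          simp only [w']
          rw [mul_assoc, Polynomial.coeff_X_pow_mul', if_neg (by omega)]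
        rw [h1, zero_add, Matrix.diagonal_apply]
        split_ifs with hij
        · subst hij
          rw [Finset.sum_eq_single i] <;> simp +contextual [hw'0]
        · refine Finset.sum_eq_zero fun l _ => ?_
          by_cases hl : l = i
          · rw [hw'0 j l (by rintro rfl; exact hij hl.symm), mul_zero]
          · rw [hw'0 i l hl, zero_mul]
    rw [this, Matrix.det_fromBlocks_zero₁₂, Matrix.det_diagonal]
    refine mul_ne_zero ?_ (Finset.prod_ne_zero_iff.2 fun i _ => mul_ne_zero (hw'1 i) (hw'1 i))
    have hco : ∀ i j : Fin b, (Polynomial.X ^ (i:ℕ) * w * Polynomial.X ^ (b - 1 - (j:ℕ))).coeff (b-1) =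
        if (i:ℕ) + (b - 1 - j) ≤ b - 1 then w.coeff (b - 1 - (i + (b - 1 - j))) else 0 := by
      intro i j
      rw [mul_right_comm, ← pow_add, Polynomial.coeff_X_pow_mul']
    rw [Matrix.det_of_isUpperTriangular]
    · refine Finset.prod_ne_zero_iff.2 fun i _ => ?_
      have := i.2
      rw [Matrix.of_apply, hco, if_pos (by omega)]
      rwa [show b - 1 - ((i:ℕ) + (b - 1 - i)) = 0 by omega]
    · intro i j hij
      have hij' : (j : ℕ) < i := hij
      have := i.2
      rw [Matrix.of_apply, hco, if_neg (by omega)]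
  · intro τ _ c v hτ
    have : (Matrix.of fun i j => (∑ l, c l • nu d (v l)) ⟨_, hM i j⟩) =
        (Matrix.of fun i l => MvPolynomial.eval (v l) (HH i0 i1 (b+k-1) (f i) : PR K m)) *
        (Matrix.of fun l j => c l * MvPolynomial.eval (v l) (HH i0 i1 (d-(b+k-1)) (g j) : PR K m)) := by
      ext i j
      simp only [Matrix.of_apply, Matrix.mul_apply, LinearMap.sum_apply, LinearMap.smul_apply,
        nu_apply, map_mul, smul_eq_mul]
      exact Finset.sum_congr rfl fun l _ => by ring
    rw [this]
    exact det_zero_of_card _ _ (by simpa using hτ)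

theorem FF_brank [IsAlgClosed K] [CharZero K] (h01 : i0 ≠ i1) (d b : ℕ) {k : ℕ} (hb : 1 ≤ b)
    (hd : 2 * (b + k) ≤ d)
    (y : Fin k → K) (hy : Function.Injective y) (hy0 : ∀ j, y j ≠ 0) :
    ∃ hF : FF (m := m) i0 i1 i2 d (b-1) y ≠ 0, brank d (Projectivization.mk K _ hF) = b + k := by
  obtain ⟨M, h2, h3⟩ := FF_det (m := m) (i2 := i2) h01 d b hb hd y hy hy0
  have hF : FF (m := m) i0 i1 i2 d (b-1) y ≠ 0 := by
    intro h
    apply h2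
    rw [h]
    have : Nonempty (Fin b ⊕ Fin k) := ⟨Sum.inl ⟨0, hb⟩⟩
    exact Matrix.det_zero
  refine ⟨hF, brank_mk d (b+k) (by omega) _ hF
    (Finset.insertNone ((Finset.range (2*d+1)).filter (fun n => b ∣ n + 1)))
    (fun o => o.elim 0 (fun n => n + 1 - b))
    (fun o => o.elim (∑ j, nu d (pvv i0 i1 (y j))) (fun n => CC i0 i1 i2 d n)) ?_ ?_ M h2 h3⟩
  · rw [Finset.sum_insertNone]
    simp only [Option.elim, pow_zero, one_smul]
    rw [Finset.sum_eq_single (b-1)]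
    · rw [show b - 1 + 1 - b = 0 by omega, pow_zero, one_smul]; exact add_comm _ _
    · intro n hn hne
      have h1 : b ≤ n + 1 := Nat.le_of_dvd (by omega) (Finset.mem_filter.1 hn).2
      rw [zero_pow (by omega), zero_smul]
    · intro h
      exfalso; apply h
      simp only [Finset.mem_filter, Finset.mem_range]
      exact ⟨by omega, ⟨1, by omega⟩⟩
  · intro x hx
    rw [Finset.sum_insertNone]
    simp only [Option.elim, pow_zero, one_smul]
    rw [add_comm]
    exact FF_curve d b hb y x hx

theorem finrank_jump {E : Type} [AddCommGroup E] [Module K E] [Module.Finite K E]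
    (V V' : Submodule K E) (hV : V ≤ V') {j : ℕ} (w : Fin j → E) (hw : ∀ i, w i ∈ V')
    (h : ∀ c : Fin j → K, ∑ i, c i • w i ∈ V → c = 0) :
    Module.finrank K V + j ≤ Module.finrank K V' := by
  let L : (V × (Fin j → K)) →ₗ[K] E :=
    V.subtype.coprod (Fintype.linearCombination K w)
  have hL : ∀ x, L x ∈ V' := by
    intro x
    simp only [L, LinearMap.coprod_apply, Submodule.subtype_apply, Fintype.linearCombination_apply]
    exact V'.add_mem (hV x.1.2) (V'.sum_mem fun i _ => V'.smul_mem _ (hw i))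
  have hinj : Function.Injective (L.codRestrict V' hL) := by
    rw [← LinearMap.ker_eq_bot, LinearMap.ker_codRestrict, LinearMap.ker_eq_bot']
    rintro ⟨x, c⟩ hx
    simp only [L, LinearMap.coprod_apply, Submodule.subtype_apply,
      Fintype.linearCombination_apply] at hx
    have hc : c = 0 := h c (by
      rw [eq_neg_of_add_eq_zero_right hx]; exact V.neg_mem x.2)
    subst hc
    simpa using hx
  have := LinearMap.finrank_le_finrank_of_injective hinj
  simpa [Module.finrank_prod] using this

end
section
variable {m : ℕ} {K : Type} [Field K] {i0 i1 i2 : Fin (m+1)}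

theorem HH_sum (e : ℕ) {ι : Type} (s : Finset ι) (c : ι → K) (p : ι → Polynomial K) :
    (HH i0 i1 e (∑ i ∈ s, c i • p i) : PR K m) = ∑ i ∈ s, c i • HH i0 i1 e (p i) := by
  simp only [HH, Finset.smul_sum]
  rw [Finset.sum_comm]
  refine Finset.sum_congr rfl fun n _ => ?_
  simp only [Polynomial.finsetSum_coeff, Polynomial.coeff_smul, smul_eq_mul, map_sum, map_mul,
    Finset.sum_mul, MvPolynomial.smul_eq_C_mul]
  exact Finset.sum_congr rfl fun i _ => by ring

/-- a degree `e` monomial restricting to `X^j` on the conic -/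
theorem exists_mono (h01 : i0 ≠ i1) (h02 : i0 ≠ i2) (h12 : i1 ≠ i2) (e j : ℕ) (h : j ≤ 2 * e) :
    ∃ f : PR K m, f.IsHomogeneous e ∧
      MvPolynomial.aeval (cvv (K := K) i0 i1 i2) f = Polynomial.X ^ j := by
  refine ⟨MvPolynomial.X i0 ^ (e - (j/2 + j%2)) * (MvPolynomial.X i1 ^ (j%2) * MvPolynomial.X i2 ^ (j/2)),
    ?_, ?_⟩
  · have := ((MvPolynomial.isHomogeneous_X K i0).pow (e - (j/2 + j%2))).mul
      (((MvPolynomial.isHomogeneous_X K i1).pow (j%2)).mul ((MvPolynomial.isHomogeneous_X K i2).pow (j/2)))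
    convert this using 1
    omega
  · simp only [map_mul, map_pow, MvPolynomial.aeval_X]
    simp only [cvv, h01.symm, h02.symm, h12.symm, if_true, if_false, one_pow, one_mul]
    rw [← pow_mul, ← pow_add, Nat.mod_add_div]

variable {τ : Type} [Fintype τ]

theorem core_vanish (h01 : i0 ≠ i1) (h02 : i0 ≠ i2) (h12 : i1 ≠ i2) (D β : ℕ)
    (c : τ → K) (v : τ → Fin (m+1) → K)
    (hF : ∀ h : PR K m, h.IsHomogeneous D →
      (MvPolynomial.aeval (cvv (K := K) i0 i1 i2) (MvPolynomial.X i2 * h)).coeff (β+2) =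
        ∑ a, c a * MvPolynomial.eval (v a) h)
    (t : ℕ) (ht : t ≤ D) (g : PR K m) (hg : g.IsHomogeneous t)
    (hv : ∀ a, MvPolynomial.eval (v a) g = 0) (i : ℕ) (hi : i ≤ β) (hi2 : β - i ≤ 2 * (D - t)) :
    (MvPolynomial.aeval (cvv (K := K) i0 i1 i2) g).coeff i = 0 := by
  obtain ⟨f, hf, hfe⟩ := exists_mono (K := K) h01 h02 h12 (D - t) (β - i) hi2
  have := hF (g * f) (by have := hg.mul hf; rwa [Nat.add_sub_cancel' ht] at this)
  simp only [map_mul, hv, zero_mul, mul_zero, Finset.sum_const_zero, hfe, MvPolynomial.aeval_X] at this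
  have hc : cvv (K := K) i0 i1 i2 i2 = Polynomial.X ^ 2 := by simp [cvv, h02.symm, h12.symm]
  rw [hc, mul_comm, mul_assoc, ← pow_add, Polynomial.coeff_mul_X_pow', if_pos (by omega)] at this
  rwa [show β + 2 - (β - i + 2) = i by omega] at this

/-- evaluation space -/
noncomputable def VV (v : τ → Fin (m+1) → K) (t : ℕ) : Submodule K (τ → K) :=
  (Hd K m t).map (LinearMap.pi fun a => (MvPolynomial.aeval (v a)).toLinearMap)

theorem mem_VV (v : τ → Fin (m+1) → K) (t : ℕ) (w : τ → K) :
    w ∈ VV v t ↔ ∃ f : PR K m, f.IsHomogeneous t ∧ ∀ a, MvPolynomial.eval (v a) f = w a := by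
  simp only [VV, Submodule.mem_map, MvPolynomial.mem_homogeneousSubmodule, funext_iff,
    LinearMap.pi_apply, AlgHom.toLinearMap_apply, MvPolynomial.aeval_eq_eval]

theorem VV_mono (v : τ → Fin (m+1) → K) (hv : ∀ a, v a i2 = 1) (t : ℕ) : VV v t ≤ VV v (t+1) := by
  intro w hw
  rw [mem_VV] at hw ⊢
  obtain ⟨f, hf, h⟩ := hw
  refine ⟨MvPolynomial.X i2 * f, ?_, fun a => by simp [hv, h]⟩
  have := (MvPolynomial.isHomogeneous_X K i2).mul hf
  rwa [add_comm 1 t] at this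

/-- from a relation modulo `VV t` produce a vanishing form -/
theorem exists_form (v : τ → Fin (m+1) → K) (hv : ∀ a, v a i2 = 1) (t : ℕ) (p : Polynomial K)
    (h : (fun a => MvPolynomial.eval (v a) (HH i0 i1 (t+1) p : PR K m)) ∈ VV v t) :
    ∃ f : PR K m, f.IsHomogeneous t ∧
      (HH i0 i1 (t+1) p - MvPolynomial.X i2 * f).IsHomogeneous (t+1) ∧
      ∀ a, MvPolynomial.eval (v a) (HH i0 i1 (t+1) p - MvPolynomial.X i2 * f) = 0 := by
  rw [mem_VV] at h
  obtain ⟨f, hf, h⟩ := h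
  refine ⟨f, hf, ?_, fun a => by simp [hv, h]⟩
  have := (MvPolynomial.isHomogeneous_X K i2).mul hf
  rw [add_comm 1 t] at this
  exact (HH_hom _ _).sub this

theorem form_coeff (h01 : i0 ≠ i1) (h02 : i0 ≠ i2) (h12 : i1 ≠ i2) (t : ℕ) (p : Polynomial K)
    (hp : p.natDegree ≤ t + 1) (f : PR K m) :
    MvPolynomial.aeval (cvv (K := K) i0 i1 i2) (HH i0 i1 (t+1) p - MvPolynomial.X i2 * f) =
      p - Polynomial.X ^ 2 * MvPolynomial.aeval (cvv (K := K) i0 i1 i2) f := by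
  have hc : cvv (K := K) i0 i1 i2 i2 = Polynomial.X ^ 2 := by simp [cvv, h02.symm, h12.symm]
  rw [map_sub, map_mul, aeval_HH h01 _ _ hp, MvPolynomial.aeval_X, hc]

theorem rel_coeff (h01 : i0 ≠ i1) (h02 : i0 ≠ i2) (h12 : i1 ≠ i2) (D β : ℕ)
    (c : τ → K) (v : τ → Fin (m+1) → K) (hv : ∀ a, v a i2 = 1)
    (hF : ∀ h : PR K m, h.IsHomogeneous D →
      (MvPolynomial.aeval (cvv (K := K) i0 i1 i2) (MvPolynomial.X i2 * h)).coeff (β+2) =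
        ∑ a, c a * MvPolynomial.eval (v a) h)
    (t : ℕ) (ht : t + 1 ≤ D) (p : Polynomial K) (hp : p.natDegree ≤ t + 1)
    (h : (fun a => MvPolynomial.eval (v a) (HH i0 i1 (t+1) p : PR K m)) ∈ VV v t)
    (i : ℕ) (hi : i < 2) (hβ : 2 ≤ β) (hi2 : β - i ≤ 2 * (D - (t + 1))) : p.coeff i = 0 := by
  obtain ⟨f, hf, hg, hgv⟩ := exists_form v hv t p h
  have := core_vanish h01 h02 h12 D β c v hF (t+1) ht _ hg hgv i (by omega) hi2
  rw [form_coeff h01 h02 h12 t p hp, Polynomial.coeff_sub, Polynomial.coeff_X_pow_mul',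
    if_neg (by omega), sub_zero] at this
  exact this

/-- general jump criterion -/
theorem jump (v : τ → Fin (m+1) → K) (hv : ∀ a, v a i2 = 1) (t j : ℕ) (p : Fin j → Polynomial K)
    (h : ∀ c : Fin j → K, (fun a => MvPolynomial.eval (v a)
      (HH i0 i1 (t+1) (∑ i, c i • p i) : PR K m)) ∈ VV v t → c = 0) :
    Module.finrank K (VV v t) + j ≤ Module.finrank K (VV v (t+1)) := by
  refine finrank_jump _ _ (VV_mono v hv t)
    (fun i a => MvPolynomial.eval (v a) (HH i0 i1 (t+1) (p i) : PR K m)) ?_ ?_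
  · intro i
    rw [mem_VV]
    exact ⟨_, HH_hom _ _, fun a => rfl⟩
  · intro c hc
    apply h c
    convert hc using 1
    funext a
    rw [HH_sum]
    simp [MvPolynomial.smul_eval]

theorem num_final (D β k T u : ℕ) (hβ : 2 ≤ β) (hD : 2 * (β + 3 + k) + 2 ≤ D + 1) (x : ℕ → ℕ)
    (base : 1 ≤ x 0)
    (two : ∀ t, 2 * (t + 1) + β ≤ 2 * D → x t + 2 ≤ x (t+1))
    (one : ∀ t, 2 * (t + 1) + β ≤ 2 * D + 1 → x t + 1 ≤ x (t+1))
    (three : ∀ t, 1 ≤ t → t + u ≤ k → x t + 3 ≤ x (t+1))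
    (bound : ∀ t, x t ≤ T) : 2 * D + 1 - β + k ≤ T + u := by
  have grow : ∀ t, 2 * t + β ≤ 2 * D → 1 + 2 * t + min (t - 1) (k - u) ≤ x t := by
    intro t
    induction t with
    | zero => intro _; simpa using base
    | succ t ih =>
      intro ht
      have ih' := ih (by omega)
      have h2 := two t ht
      have h3 := three t
      generalize x (t+1) = z at *
      generalize x t = w at *
      rcases Nat.eq_zero_or_pos t with rfl | h
      · omega
      · by_cases hc : t + u ≤ k
        · have := h3 h hc
          omega
        · omega
  obtain ⟨N, hN1, hN2⟩ : ∃ N, 2 * N + β ≤ 2 * D ∧ 2 * D ≤ 2 * N + β + 1 :=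
    ⟨(2 * D - β) / 2, by omega, by omega⟩
  have hg := grow N hN1
  have hb := bound N
  have ho := one N
  have hb' := bound (N+1)
  rw [min_eq_right (by omega)] at hg
  generalize x (N+1) = z at *
  generalize x N = w at *
  clear grow bound one two three base
  by_cases hpar : 2 * (N + 1) + β ≤ 2 * D + 1
  · have := ho hpar
    omega
  · omega

set_option maxHeartbeats 1000000 in
theorem FF_lower_aux (h01 : i0 ≠ i1) (h02 : i0 ≠ i2) (h12 : i1 ≠ i2) (D β k : ℕ) (hβ : 2 ≤ β)
    (hD : 2 * (β + 3 + k) + 2 ≤ D + 1)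
    (y : Fin k → K) (hy : Function.Injective y) (hy0 : ∀ j, y j ≠ 0)
    (c : τ → K) (v : τ → Fin (m+1) → K) (hv : ∀ a, v a i2 = 1)
    {υ : Type} [Fintype υ] (c' : υ → K) (v' : υ → Fin (m+1) → K) (hv' : ∀ a, v' a i2 = 0)
    (hF : ∀ f : PR K m, f.IsHomogeneous (D+1) →
      (MvPolynomial.aeval (cvv (K := K) i0 i1 i2) f).coeff (β+2) +
        ∑ j, MvPolynomial.eval (pvv i0 i1 (y j)) f =
      ∑ a, c a * MvPolynomial.eval (v a) f + ∑ a, c' a * MvPolynomial.eval (v' a) f) :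
    2 * D + 1 - β + k ≤ Fintype.card τ + Fintype.card υ := by
  classical
  have hp2 : ∀ x : K, pvv i0 i1 x i2 = 0 := fun x => by simp [pvv, h02.symm, h12.symm]
  have hF1 : ∀ h : PR K m, h.IsHomogeneous D →
      (MvPolynomial.aeval (cvv (K := K) i0 i1 i2) (MvPolynomial.X i2 * h)).coeff (β+2) =
        ∑ a, c a * MvPolynomial.eval (v a) h := by
    intro h hh
    have h1 := (MvPolynomial.isHomogeneous_X K i2).mul hh
    rw [add_comm 1 D] at h1
    have := hF _ h1
    simpa only [map_mul, MvPolynomial.eval_X, hp2, hv, hv', zero_mul, one_mul, mul_zero,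
      Finset.sum_const_zero, add_zero] using this
  have hrel := rel_coeff h01 h02 h12 D β c v hv hF1
  set x : ℕ → ℕ := fun t => Module.finrank K (VV v t) with hx
  -- base
  have base : 1 ≤ x 0 := by
    have := finrank_jump (⊥ : Submodule K (τ → K)) (VV v 0) bot_le (j := 1) (fun _ _ => 1)
      (fun _ => (mem_VV _ _ _).2 ⟨1, MvPolynomial.isHomogeneous_one _ _, by simp⟩) (by
        intro e he
        have h0 : ∀ a : τ, e 0 = 0 := fun a => by
          have := congrFun ((Submodule.mem_bot K).1 he) a
          simpa using this
        have := core_vanish h01 h02 h12 D β c v hF1 0 (by omega) (MvPolynomial.C (e 0))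
          (MvPolynomial.isHomogeneous_C _ _) (fun a => by simp [h0 a]) 0 (by omega) (by omega)
        simp [Polynomial.algebraMap_eq] at this
        funext i
        rw [Subsingleton.elim i 0, this]; rfl)
    rw [finrank_bot, zero_add] at this
    exact this
  have two : ∀ t, 2 * (t + 1) + β ≤ 2 * D → x t + 2 ≤ x (t+1) := by
    intro t ht
    refine jump (i0 := i0) (i1 := i1) v hv t 2 (fun i => Polynomial.X ^ (i:ℕ)) ?_
    intro e he
    have hdeg : (∑ i : Fin 2, e i • (Polynomial.X : Polynomial K) ^ (i:ℕ)).natDegree ≤ t + 1 := by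
      refine Polynomial.natDegree_sum_le_of_forall_le _ _ fun i _ => ?_
      refine (Polynomial.natDegree_smul_le _ _).trans ?_
      rw [Polynomial.natDegree_X_pow]; omega
    have hr := hrel t (by omega) _ hdeg he
    have e0 := hr 0 (by omega) hβ (by omega)
    have e1 := hr 1 (by omega) hβ (by omega)
    simp [Fin.sum_univ_two, Polynomial.coeff_X, Polynomial.coeff_one] at e0 e1
    funext i
    fin_cases i
    · exact e0
    · exact e1
  have one : ∀ t, 2 * (t + 1) + β ≤ 2 * D + 1 → x t + 1 ≤ x (t+1) := by
    intro t ht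
    refine jump (i0 := i0) (i1 := i1) v hv t 1 (fun i => Polynomial.X) ?_
    intro e he
    have hdeg : (∑ i : Fin 1, e i • (Polynomial.X : Polynomial K)).natDegree ≤ t + 1 := by
      refine Polynomial.natDegree_sum_le_of_forall_le _ _ fun i _ => ?_
      refine (Polynomial.natDegree_smul_le _ _).trans ?_
      rw [Polynomial.natDegree_X]; omega
    have hr := hrel t (by omega) _ hdeg he
    have e1 := hr 1 (by omega) hβ (by omega)
    simp at e1
    funext i
    rw [Subsingleton.elim i 0, e1]; rfl
  have three : ∀ t, 1 ≤ t → t + Fintype.card υ ≤ k → x t + 3 ≤ x (t+1) := by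
    intro t ht1 htk
    refine jump (i0 := i0) (i1 := i1) v hv t 3 (fun i => Polynomial.X ^ (i:ℕ)) ?_
    intro e he
    set p : Polynomial K := ∑ i : Fin 3, e i • (Polynomial.X : Polynomial K) ^ (i:ℕ) with hp
    have hdeg : p.natDegree ≤ t + 1 := by
      refine Polynomial.natDegree_sum_le_of_forall_le _ _ fun i _ => ?_
      refine (Polynomial.natDegree_smul_le _ _).trans ?_
      rw [Polynomial.natDegree_X_pow]; omega
    have hr := hrel t (by omega) _ hdeg he
    have e0 := hr 0 (by omega) hβ (by omega)
    have e1 := hr 1 (by omega) hβ (by omega)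
    simp [hp, Fin.sum_univ_three, Polynomial.coeff_X, Polynomial.coeff_one, Polynomial.coeff_X_pow] at e0 e1
    have hpe : p = e 2 • Polynomial.X ^ 2 := by
      rw [hp, Fin.sum_univ_three, e0, e1]; simp
    have e2 : e 2 = 0 := by
      by_contra hne
      obtain ⟨f, hf, hg, hgv⟩ := exists_form v hv t p he
      set g : PR K m := HH i0 i1 (t+1) p - MvPolynomial.X i2 * f with hgdef
      have hcore : ∀ i ≤ β, (MvPolynomial.aeval (cvv (K := K) i0 i1 i2) g).coeff i = 0 :=
        fun i hi => core_vanish h01 h02 h12 D β c v hF1 (t+1) (by omega) g hg hgv i hi (by omega)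
      -- choose a point not hit
      obtain ⟨j0, hj0⟩ : ∃ j0, ∀ a, v' a i1 / v' a i0 ≠ y j0 := by
        by_contra hcon
        push Not at hcon
        choose s hs using hcon
        have hinj : Function.Injective s := by
          intro i j hij
          apply hy
          rw [← hs i, ← hs j, hij]
        have := Fintype.card_le_of_injective s hinj
        simp at this
        omega
      have hk : 0 < k := Fin.pos j0
      let q : Polynomial K := Polynomial.X ^ 2 *
        ((∏ l ∈ Finset.univ.erase j0, (Polynomial.X - Polynomial.C (y l))) *
          ∏ a, (Polynomial.X - Polynomial.C (v' a i1 / v' a i0)))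
      have hqdeg : q.natDegree ≤ 2 + ((k - 1) + Fintype.card υ) := by
        refine Polynomial.natDegree_mul_le.trans (add_le_add (by simp)
          (Polynomial.natDegree_mul_le.trans (add_le_add ?_ ?_)))
        · rw [Polynomial.natDegree_prod_of_monic _ _ fun l _ => Polynomial.monic_X_sub_C _]
          simp
        · rw [Polynomial.natDegree_prod_of_monic _ _ fun l _ => Polynomial.monic_X_sub_C _]
          simp
      have hqdeg' : q.natDegree < D - t := by omega
      have hmain := hF (g * HH i0 i1 (D - t) q) (by
        have := hg.mul (HH_hom (m := m) (i0 := i0) (i1 := i1) (D - t) q)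
        rwa [show t + 1 + (D - t) = D + 1 by omega] at this)
      have z1 : ∀ a, MvPolynomial.eval (v' a) (HH i0 i1 (D - t) q : PR K m) = 0 := by
        intro a
        by_cases ha : v' a i0 = 0
        · exact eval_HH_zero _ _ hqdeg' _ ha
        · refine eval_HH_root _ _ hqdeg'.le _ ha ?_
          simp only [q, Polynomial.eval_mul, Polynomial.eval_prod]
          rw [Finset.prod_eq_zero (Finset.mem_univ a) (by simp)]
          simp
      have z2 : (MvPolynomial.aeval (cvv (K := K) i0 i1 i2) g * q).coeff (β+2) = 0 := by
        have : Polynomial.X ^ (β+1) ∣ MvPolynomial.aeval (cvv (K := K) i0 i1 i2) g :=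
          Polynomial.X_pow_dvd_iff.2 fun i hi => hcore i (by omega)
        obtain ⟨G, hG⟩ := this
        rw [hG]
        simp only [q]
        rw [mul_mul_mul_comm, ← pow_add, Polynomial.coeff_X_pow_mul', if_neg (by omega)]
      have z3 : ∀ j, MvPolynomial.eval (pvv i0 i1 (y j)) g = e 2 * y j ^ 2 := by
        intro j
        rw [hgdef, map_sub, map_mul, MvPolynomial.eval_X, hp2, eval_pvv_HH h01 _ _ hdeg, hpe]
        simp
      have z4 : ∀ j, j ≠ j0 → q.eval (y j) = 0 := by
        intro j hj
        simp only [q, Polynomial.eval_mul, Polynomial.eval_prod]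
        rw [Finset.prod_eq_zero (i := j) (by simp [hj]) (by simp)]
        simp
      simp only [map_mul, aeval_HH h01 _ _ hqdeg'.le, z2, z1, hgv, z3, eval_pvv_HH h01 _ _ hqdeg'.le,
        zero_mul, mul_zero, Finset.sum_const_zero, zero_add] at hmain
      rw [Finset.sum_eq_single j0 (fun j _ hj => by rw [z4 j hj, mul_zero]) (by simp)] at hmain
      refine mul_ne_zero (mul_ne_zero hne (pow_ne_zero 2 (hy0 j0))) ?_ hmain
      simp only [q, Polynomial.eval_mul, Polynomial.eval_prod]
      refine mul_ne_zero (by simp [hy0]) (mul_ne_zero (Finset.prod_ne_zero_iff.2 fun l hl => ?_)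
        (Finset.prod_ne_zero_iff.2 fun a _ => ?_))
      · have : l ≠ j0 := by simpa using hl
        simpa [sub_eq_zero] using fun h => this (hy h).symm
      · simpa [sub_eq_zero] using (hj0 a).symm
    funext i
    fin_cases i
    · exact e0
    · exact e1
    · exact e2
  have bound : ∀ t, x t ≤ Fintype.card τ := by
    intro t
    have := Submodule.finrank_le (VV v t)
    simpa using this
  exact num_final D β k _ _ hβ hD x base two one three bound

theorem FF_lower (h01 : i0 ≠ i1) (h02 : i0 ≠ i2) (h12 : i1 ≠ i2) (d b k : ℕ) (hb : 5 ≤ b)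
    (hd : 2 * (b + k) + 2 ≤ d)
    (y : Fin k → K) (hy : Function.Injective y) (hy0 : ∀ j, y j ≠ 0)
    (ι : Type) [Fintype ι] (c : ι → K) (v : ι → Fin (m+1) → K)
    (h : FF i0 i1 i2 d (b-1) y = ∑ i, c i • nu d (v i)) :
    2 * d + 2 - b + k ≤ Fintype.card ι := by
  classical
  obtain ⟨D, rfl⟩ : ∃ D, d = D + 1 := ⟨d - 1, by omega⟩
  obtain ⟨β, rfl⟩ : ∃ β, b = β + 3 := ⟨b - 3, by omega⟩
  have := FF_lower_aux (τ := {i // v i i2 ≠ 0}) (υ := {i // ¬ v i i2 ≠ 0}) h01 h02 h12 D β k (by omega) hd y hy hy0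
    (fun i => c i * v i i2 ^ (D+1)) (fun i => (v i i2)⁻¹ • v i)
    (fun a => by simp [inv_mul_cancel₀ a.2])
    (fun i => c i) (fun i => v i) (fun a => by simpa using a.2) (by
      intro f hf
      have h1 := LinearMap.congr_fun h ⟨f, hf⟩
      rw [FF_apply] at h1
      refine h1.trans ?_
      rw [LinearMap.sum_apply, ← Fintype.sum_subtype_add_sum_subtype (fun i => v i i2 ≠ 0)]
      congr 1
      · refine Finset.sum_congr rfl fun i _ => ?_
        have h2 : v i = v i i2 • ((v i i2)⁻¹ • v i) := by
          rw [smul_smul, mul_inv_cancel₀ i.2, one_smul]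
        have h3 : nu (D+1) (v i) = v i i2 ^ (D+1) • nu (D+1) ((v i i2)⁻¹ • v i) := by
          rw [← nu_smul, ← h2]
        rw [h3]
        simp only [LinearMap.smul_apply, nu_apply, smul_eq_mul]
        ring)
  have hcard := Fintype.card_subtype_compl (fun i => v i i2 ≠ 0)
  have hle := Fintype.card_subtype_le (fun i => v i i2 ≠ 0)
  omega

end

theorem stmt17_aux (K : Type) [Field K] [IsAlgClosed K] [CharZero K]
    (m b k d : ℕ) (hm : 2 ≤ m) (hb : 5 ≤ b) (hd : 2 * (b + k) + 2 ≤ d) :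
    (sigmaSet K m d (b + k) (2 * d + 2 - b + k)).Nonempty := by
  let i0 : Fin (m+1) := ⟨0, by omega⟩
  let i1 : Fin (m+1) := ⟨1, by omega⟩
  let i2 : Fin (m+1) := ⟨2, by omega⟩
  have h01 : i0 ≠ i1 := by simp [i0, i1]
  have h02 : i0 ≠ i2 := by simp [i0, i2]
  have h12 : i1 ≠ i2 := by simp [i1, i2]
  let y : Fin k → K := fun j => ((j : ℕ) : K) + 1
  have hy : Function.Injective y := by
    intro i j hij
    have : ((i : ℕ) : K) = ((j : ℕ) : K) := add_right_cancel hij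
    exact Fin.ext (Nat.cast_injective this)
  have hy0 : ∀ j, y j ≠ 0 := fun j => Nat.cast_add_one_ne_zero _
  obtain ⟨hF, hbr⟩ := FF_brank (i2 := i2) h01 d b (k := k) (by omega) (by omega) y hy hy0
  refine ⟨Projectivization.mk K _ hF, hbr, ?_⟩
  refine srank_mk d _ _ hF (FF_upper d b (by omega) (by omega) y) ?_
  intro ι _ c v h
  exact FF_lower h01 h02 h12 d b k hb hd y hy hy0 ι c v h

/-- Step (d) of the proof of the main theorem: nonemptiness of `σ_{s,r}(X_{m,d})` for
`2d+2-s ≤ r ≤ 2d+s-7` with `r + s` even. -/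
theorem stmt17 (K : Type) [Field K] [IsAlgClosed K] [CharZero K]
    (m s d : ℕ) (hm : 2 ≤ m) (hs : 5 ≤ s) (hd : 2 * s + 2 ≤ d) :
    ∀ r : ℕ, 2 * d + 2 ≤ r + s → r + 7 ≤ 2 * d + s → (r + s) % 2 = 0 →
      (sigmaSet K m d s r).Nonempty := by
  intro r h1 h2 h3
  obtain ⟨b, hb⟩ : ∃ b, 2 * b = 2 * d + 2 + s - r := ⟨(2 * d + 2 + s - r) / 2, by omega⟩
  obtain ⟨k, hk⟩ : ∃ k, s = b + k := ⟨s - b, by omega⟩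
  have := stmt17_aux K m b k d hm (by omega) (by omega)
  rw [hk, show r = 2 * d + 2 - b + k by omega]
  exact this
end

section
/- Fix integers m ≥ 2, s ≥ 5 and d ≥ 2s+2. For every integer r with 2d+3−s ≤ r ≤ 2d+s−7 and r+s ≡ 1 (mod 2), one has σ_{s,r}(X_{m,d}) ≠ ∅. -/
open scoped LinearAlgebra.Projectivization

open MvPolynomial

noncomputable section PlaneGeom
namespace S18
variable {K : Type} [Field K]

abbrev P3 (K : Type) [Field K] := MvPolynomial (Fin 3) K

def Nrm (v : Fin 3 → K) : Prop :=
  v 0 = 1 ∨ (v 0 = 0 ∧ v 1 = 1) ∨ (v 0 = 0 ∧ v 1 = 0 ∧ v 2 = 1)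

def lin (a : Fin 3 → K) : P3 K := C (a 0) * X 0 + C (a 1) * X 1 + C (a 2) * X 2

def quad (a : Fin 6 → K) : P3 K :=
  C (a 0) * (X 0 * X 0) + C (a 1) * (X 1 * X 1) + C (a 2) * (X 2 * X 2)
   + C (a 3) * (X 0 * X 1) + C (a 4) * (X 0 * X 2) + C (a 5) * (X 1 * X 2)

lemma eval_lin (a v : Fin 3 → K) : eval v (lin a) = a 0 * v 0 + a 1 * v 1 + a 2 * v 2 := by
  simp [lin]

lemma eval_quad (a : Fin 6 → K) (v : Fin 3 → K) : eval v (quad a) =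
    a 0 * (v 0 * v 0) + a 1 * (v 1 * v 1) + a 2 * (v 2 * v 2) + a 3 * (v 0 * v 1)
      + a 4 * (v 0 * v 2) + a 5 * (v 1 * v 2) := by
  simp [quad]

lemma hom_CX (c : K) (i : Fin 3) : (C c * X i : P3 K).IsHomogeneous 1 := by
  simpa using (isHomogeneous_C (Fin 3) c).mul (isHomogeneous_X K i)

lemma hom_CXX (c : K) (i j : Fin 3) : (C c * (X i * X j) : P3 K).IsHomogeneous 2 := by
  simpa using (isHomogeneous_C (Fin 3) c).mul ((isHomogeneous_X K i).mul (isHomogeneous_X K j))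

lemma hom_lin (a : Fin 3 → K) : (lin a).IsHomogeneous 1 :=
  ((hom_CX _ _).add (hom_CX _ _)).add (hom_CX _ _)

lemma hom_quad (a : Fin 6 → K) : (quad a).IsHomogeneous 2 :=
  (((((hom_CXX _ _ _).add (hom_CXX _ _ _)).add (hom_CXX _ _ _)).add (hom_CXX _ _ _)).add
    (hom_CXX _ _ _)).add (hom_CXX _ _ _)

lemma sep {v w : Fin 3 → K} (hv : Nrm v) (hw : Nrm w) (h : v ≠ w) :
    ∃ a : Fin 3 → K, eval v (lin a) = 0 ∧ eval w (lin a) ≠ 0 := by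
  by_contra! H
  have h1 := H ![v 1, -v 0, 0] (by simp [eval_lin]; ring)
  have h2 := H ![v 2, 0, -v 0] (by simp [eval_lin]; ring)
  have h3 := H ![0, v 2, -v 1] (by simp [eval_lin]; ring)
  simp [eval_lin] at h1 h2 h3
  apply h
  have : v 0 = w 0 ∧ v 1 = w 1 ∧ v 2 = w 2 := by
    unfold Nrm at hv hw
    rcases hv with hv | ⟨hv, hv'⟩ | ⟨hv, hv', hv''⟩ <;>
    rcases hw with hw | ⟨hw, hw'⟩ | ⟨hw, hw', hw''⟩ <;> simp_all <;> grind
  funext i; fin_cases i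
  · exact this.1
  · exact this.2.1
  · exact this.2.2

variable (A : Finset (Fin 3 → K))

def Rel (t : ℕ) (μ : (Fin 3 → K) → K) : Prop :=
  ∀ h : P3 K, h.IsHomogeneous t → ∑ v ∈ A, μ v * eval v h = 0

open Classical in
def supp (μ : (Fin 3 → K) → K) : Finset (Fin 3 → K) := A.filter (fun v => μ v ≠ 0)

variable {A}

lemma mem_supp {μ : (Fin 3 → K) → K} {v} : v ∈ supp A μ ↔ v ∈ A ∧ μ v ≠ 0 := by
  simp [supp]

lemma Rel.peel {t e s : ℕ} {μ : (Fin 3 → K) → K} (h : Rel A s μ) {q : P3 K}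
    (hq : q.IsHomogeneous e) (hs : s = t + e) : Rel A t (fun v => eval v q * μ v) := by
  intro g hg
  have := h (g * q) (by rw [hs]; exact hg.mul hq)
  rw [← this]
  refine Finset.sum_congr rfl fun v _ => ?_
  simp; ring

lemma T1 (hA : ∀ v ∈ A, Nrm v) : ∀ (t : ℕ) (μ : (Fin 3 → K) → K), Rel A t μ →
    (supp A μ).Nonempty → t + 2 ≤ (supp A μ).card := by
  classical
  intro t
  induction t with
  | zero =>
    intro μ hR hne
    by_contra hlt
    have h1 : (supp A μ).card = 1 := by
      have := hne.card_pos; omega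
    obtain ⟨v, hv⟩ := Finset.card_eq_one.1 h1
    have h2 := hR 1 (isHomogeneous_one _ _)
    have h3 : ∑ v ∈ supp A μ, μ v = 0 := by
      rw [← h2]; simp only [supp, map_one, mul_one]
      exact Finset.sum_filter_ne_zero _
    have h4 : v ∈ supp A μ := by simp [hv]
    rw [hv, Finset.sum_singleton] at h3
    exact (mem_supp.1 h4).2 h3
  | succ t ih =>
    intro μ hR hne
    obtain ⟨v, hv⟩ := hne
    by_cases hex : ∃ w ∈ supp A μ, w ≠ v
    · obtain ⟨w, hw, hwv⟩ := hex
      obtain ⟨a, ha1, ha2⟩ := sep (hA v (mem_supp.1 hv).1) (hA w (mem_supp.1 hw).1) hwv.symm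
      have hR' := hR.peel (hom_lin a) rfl
      have := ih _ hR' ⟨w, mem_supp.2 ⟨(mem_supp.1 hw).1, mul_ne_zero ha2 (mem_supp.1 hw).2⟩⟩
      have h2 : (supp A fun v => eval v (lin a) * μ v) ⊆ (supp A μ).erase v := by
        intro y hy
        rw [mem_supp] at hy
        rw [Finset.mem_erase, mem_supp]
        refine ⟨?_, hy.1, right_ne_zero_of_mul hy.2⟩
        rintro rfl
        exact hy.2 (by simp [ha1])
      have h3 := Finset.card_le_card h2
      rw [Finset.card_erase_of_mem hv] at h3
      omega
    · exfalso
      push Not at hex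
      have hv' := mem_supp.1 hv
      obtain ⟨i, hi⟩ : ∃ i, v i = 1 := by
        rcases hA v hv'.1 with h | ⟨_, h⟩ | ⟨_, _, h⟩ <;> exact ⟨_, h⟩
      have := hR (X i ^ (t+1)) (by simpa using (isHomogeneous_X K i).pow (t+1))
      rw [Finset.sum_eq_single v] at this
      · simp [hi] at this; exact hv'.2 this
      · intro b hb hbv
        by_cases hb' : μ b = 0
        · simp [hb']
        · exact absurd (hex b (mem_supp.2 ⟨hb, hb'⟩)) hbv
      · intro h; exact absurd hv'.1 h

lemma exists_max_count {W : Type} (E : Finset (Fin 3 → K)) (p : W → Prop) (hp : ∃ w, p w)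
    (f : W → P3 K) :
    open Classical in
    ∃ w, p w ∧ ∀ w', p w' → (E.filter (fun v => eval v (f w') = 0)).card ≤
      (E.filter (fun v => eval v (f w) = 0)).card := by
  classical
  let T : Set ℕ := {n | ∃ w, p w ∧ (E.filter (fun v => eval v (f w) = 0)).card = n}
  have hb : BddAbove T := ⟨E.card, by rintro n ⟨w, _, rfl⟩; exact Finset.card_filter_le _ _⟩
  have hne : T.Nonempty := by obtain ⟨w, hw⟩ := hp; exact ⟨_, w, hw, rfl⟩
  obtain ⟨w, hw, hw'⟩ := Nat.sSup_mem hne hb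
  refine ⟨w, hw, fun w' h' => ?_⟩
  rw [hw']
  exact le_csSup hb ⟨w', h', rfl⟩

lemma exists_ker {n k : ℕ} (hk : k < n) (f : Fin k → ((Fin n → K) →ₗ[K] K)) :
    ∃ a : Fin n → K, a ≠ 0 ∧ ∀ i, f i a = 0 := by
  have := LinearMap.ker_ne_bot_of_finrank_lt (f := LinearMap.pi f) (by simpa using hk)
  obtain ⟨a, ha, ha'⟩ := Submodule.exists_mem_ne_zero_of_ne_bot this
  exact ⟨a, ha', fun i => congrFun (LinearMap.mem_ker.1 ha) i⟩

lemma line_through (v w : Fin 3 → K) :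
    ∃ a : Fin 3 → K, a ≠ 0 ∧ eval v (lin a) = 0 ∧ eval w (lin a) = 0 := by
  let g : (Fin 3 → K) → ((Fin 3 → K) →ₗ[K] K) := fun v =>
    { toFun := fun a => eval v (lin a)
      map_add' := by intro a b; simp [eval_lin]; ring
      map_smul' := by intro a b; simp [eval_lin]; ring }
  obtain ⟨a, ha, h⟩ := exists_ker (by norm_num : 2 < 3) ![g v, g w]
  exact ⟨a, ha, h 0, h 1⟩

lemma conic_through (E : Finset (Fin 3 → K)) (hE : E.card ≤ 5) :
    ∃ a : Fin 6 → K, a ≠ 0 ∧ ∀ v ∈ E, eval v (quad a) = 0 := by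
  let g : (Fin 3 → K) → ((Fin 6 → K) →ₗ[K] K) := fun v =>
    { toFun := fun a => eval v (quad a)
      map_add' := by intro a b; simp [eval_quad]; ring
      map_smul' := by intro a b; simp [eval_quad]; ring }
  obtain ⟨a, ha, h⟩ := exists_ker (by omega : E.card < 6) (fun i => g (E.equivFin.symm i))
  refine ⟨a, ha, fun v hv => ?_⟩
  have := h (E.equivFin ⟨v, hv⟩)
  simpa [g] using this

open Classical in
lemma supp_peel (q : P3 K) (μ : (Fin 3 → K) → K) :
    (supp A fun v => eval v q * μ v) = (supp A μ).filter (fun v => ¬ eval v q = 0) := by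
  ext v; simp [mem_supp]; tauto

lemma T2 (hA : ∀ v ∈ A, Nrm v) : ∀ (t : ℕ) (μ : (Fin 3 → K) → K), Rel A t μ →
    (supp A μ).card ≤ 2 * t + 1 →
    ∃ a : Fin 3 → K, a ≠ 0 ∧ ∀ v ∈ supp A μ, eval v (lin a) = 0 := by
  classical
  intro t
  induction t with
  | zero =>
    intro μ hR hc
    rcases (supp A μ).eq_empty_or_nonempty with h | h
    · exact ⟨1, one_ne_zero, by simp [h]⟩
    · have := T1 hA 0 μ hR h; omega
  | succ t ih =>
    intro μ hR hc
    rcases (supp A μ).eq_empty_or_nonempty with h | h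
    · exact ⟨1, one_ne_zero, by simp [h]⟩
    have h1 := T1 hA _ μ hR h
    obtain ⟨a, ha, hmax⟩ := exists_max_count (supp A μ) (fun a : Fin 3 → K => a ≠ 0)
      ⟨1, one_ne_zero⟩ lin
    have h2 : 2 ≤ ((supp A μ).filter (fun v => eval v (lin a) = 0)).card := by
      obtain ⟨v, hv, w, hw, hvw⟩ := Finset.one_lt_card.1 (show 1 < (supp A μ).card by omega)
      obtain ⟨b, hb, hb1, hb2⟩ := line_through v w
      refine le_trans ?_ (hmax b hb)
      rw [← Finset.card_pair hvw]
      apply Finset.card_le_card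
      intro y hy
      simp only [Finset.mem_insert, Finset.mem_singleton] at hy
      rcases hy with rfl | rfl <;> simp [*]
    have h3 := Finset.card_filter_add_card_filter_not (s := supp A μ)
      (fun v => eval v (lin a) = 0)
    have hR' := hR.peel (hom_lin a) rfl
    have h4 := supp_peel (A := A) (lin a) μ
    obtain ⟨b, hb, hb'⟩ := ih _ hR' (by rw [h4]; omega)
    rcases (supp A fun v => eval v (lin a) * μ v).eq_empty_or_nonempty with h5 | h5
    · refine ⟨a, ha, fun v hv => ?_⟩
      by_contra hv'
      have : v ∈ (supp A fun v => eval v (lin a) * μ v) := by rw [h4]; simp [hv, hv']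
      simp [h5] at this
    · exfalso
      have h6 := T1 hA _ _ hR' h5
      have h7 := hmax b hb
      have h8 : (supp A fun v => eval v (lin a) * μ v) ⊆
          (supp A μ).filter (fun v => eval v (lin b) = 0) := by
        intro v hv
        have := hb' v hv
        rw [h4] at hv
        simp only [Finset.mem_filter] at hv ⊢
        exact ⟨hv.1, this⟩
      have h9 := Finset.card_le_card h8
      rw [h4] at h6 h9
      omega

lemma line_mul (a b : Fin 3 → K) (ha : a ≠ 0) (hb : b ≠ 0) :
    ∃ c : Fin 6 → K, c ≠ 0 ∧ ∀ v, eval v (quad c) = eval v (lin a) * eval v (lin b) := by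
  refine ⟨![a 0 * b 0, a 1 * b 1, a 2 * b 2, a 0 * b 1 + a 1 * b 0, a 0 * b 2 + a 2 * b 0,
    a 1 * b 2 + a 2 * b 1], ?_, ?_⟩
  · intro h
    have h0 := congrFun h 0
    have h1 := congrFun h 1
    have h2 := congrFun h 2
    have h3 := congrFun h 3
    have h4 := congrFun h 4
    have h5 := congrFun h 5
    simp at h0 h1 h2 h3 h4 h5
    have : (a 0 = 0 ∧ a 1 = 0 ∧ a 2 = 0) ∨ (b 0 = 0 ∧ b 1 = 0 ∧ b 2 = 0) := by
      grind
    rcases this with ⟨x, y, z⟩ | ⟨x, y, z⟩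
    · apply ha; funext i; fin_cases i <;> simpa
    · apply hb; funext i; fin_cases i <;> simpa
  · intro v
    rw [eval_quad, eval_lin, eval_lin]
    simp
    ring

lemma T3 (hA : ∀ v ∈ A, Nrm v) : ∀ (n t : ℕ) (μ : (Fin 3 → K) → K), (supp A μ).card ≤ n →
    Rel A t μ → 2 * (supp A μ).card ≤ 5 * t →
    ∃ a : Fin 6 → K, a ≠ 0 ∧ ∀ v ∈ supp A μ, eval v (quad a) = 0 := by
  classical
  intro n
  induction n with
  | zero =>
    intro t μ hn hR hc
    exact conic_through _ (by omega)
  | succ n ih =>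
    intro t μ hn hR hc
    by_cases h5 : (supp A μ).card ≤ 5
    · exact conic_through _ h5
    obtain ⟨a, ha, hmax⟩ := exists_max_count (supp A μ) (fun a : Fin 6 → K => a ≠ 0)
      ⟨1, one_ne_zero⟩ quad
    have h2 : 5 ≤ ((supp A μ).filter (fun v => eval v (quad a) = 0)).card := by
      obtain ⟨F, hF, hF5⟩ := Finset.exists_subset_card_eq (show 5 ≤ (supp A μ).card by omega)
      obtain ⟨b, hb, hb1⟩ := conic_through F hF5.le
      refine le_trans ?_ (hmax b hb)
      rw [← hF5]
      apply Finset.card_le_card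
      intro y hy
      simp [hF hy, hb1 y hy]
    have h3 := Finset.card_filter_add_card_filter_not (s := supp A μ)
      (fun v => eval v (quad a) = 0)
    obtain ⟨t', rfl⟩ : ∃ t', t = t' + 3 := ⟨t - 3, by omega⟩
    have hR' := hR.peel (t := t' + 1) (hom_quad a) rfl
    have h4 := supp_peel (A := A) (quad a) μ
    rcases (supp A fun v => eval v (quad a) * μ v).eq_empty_or_nonempty with h6 | h6
    · refine ⟨a, ha, fun v hv => ?_⟩
      by_contra hv'
      have : v ∈ (supp A fun v => eval v (quad a) * μ v) := by rw [h4]; simp [hv, hv']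
      simp [h6] at this
    obtain ⟨b, hb, hb'⟩ := ih _ _ (by rw [h4]; omega) hR' (by rw [h4]; omega)
    have h7 := hmax b hb
    have h8 : (supp A fun v => eval v (quad a) * μ v) ⊆
          (supp A μ).filter (fun v => eval v (quad b) = 0) := by
        intro v hv
        have := hb' v hv
        rw [h4] at hv
        simp only [Finset.mem_filter] at hv ⊢
        exact ⟨hv.1, this⟩
    have h9 := Finset.card_le_card h8
    obtain ⟨l, hl, hl'⟩ := T2 hA _ _ hR' (by rw [h4] at h9 ⊢; omega)
    have h10 := T1 hA _ _ hR' h6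
    have h11 : (supp A fun v => eval v (quad a) * μ v) ⊆
          (supp A μ).filter (fun v => eval v (lin l) = 0) := by
        intro v hv
        have := hl' v hv
        rw [h4] at hv
        simp only [Finset.mem_filter] at hv ⊢
        exact ⟨hv.1, this⟩
    have h12 := Finset.card_le_card h11
    have hR2 := hR.peel (t := t' + 2) (hom_lin l) rfl
    have h13 := supp_peel (A := A) (lin l) μ
    have h14 := Finset.card_filter_add_card_filter_not (s := supp A μ)
      (fun v => eval v (lin l) = 0)
    obtain ⟨k, hk, hk'⟩ := T2 hA _ _ hR2 (by rw [h13]; omega)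
    obtain ⟨c, hc0, hc1⟩ := line_mul l k hl hk
    refine ⟨c, hc0, fun v hv => ?_⟩
    rw [hc1]
    by_cases hv' : eval v (lin l) = 0
    · simp [hv']
    · rw [hk' v (by rw [h13]; simp [hv, hv']), mul_zero]

end S18
end PlaneGeom

open MvPolynomial

set_option linter.unusedSectionVars false

noncomputable section LowerBound
namespace S18
variable {K : Type} [Field K]

def ey : Fin 3 → K := ![0, 1, 0]
def ez : Fin 3 → K := ![0, 0, 1]
def Opt (j : ℕ) : Fin 3 → K := ![1, 0, (j : K)]
def ppt (i : ℕ) : Fin 3 → K := ![0, 1, (i : K) + 1]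

def Pf (a : ℕ → K) (u k : ℕ) (h : P3 K) : K :=
  eval ey (pderiv 0 h) + eval ez (pderiv 0 h) + ∑ j ∈ Finset.range u, a j * eval (Opt j) h
    + ∑ i ∈ Finset.range k, eval (ppt i) h

open Classical in
def tau (a : ℕ → K) (u k : ℕ) (v : Fin 3 → K) : K :=
  (∑ j ∈ Finset.range u, if v = Opt j then a j else 0)
    + ∑ i ∈ Finset.range k, if v = ppt i then 1 else 0

open Classical in
def dlt (p : Fin 3 → K) (v : Fin 3 → K) : K := if v = p then 1 else 0

lemma dlt_self (p : Fin 3 → K) : dlt p p = 1 := by simp [dlt]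
lemma dlt_ne {p v : Fin 3 → K} (h : v ≠ p) : dlt p v = 0 := by simp [dlt, h]

lemma sum_dlt {A : Finset (Fin 3 → K)} {p} (hp : p ∈ A) (g : (Fin 3 → K) → K) :
    ∑ v ∈ A, dlt p v * g v = g p := by
  classical
  simp [dlt, hp]

lemma sum_tau {A : Finset (Fin 3 → K)} (a : ℕ → K) (u k : ℕ)
    (hO : ∀ j < u, Opt j ∈ A) (hp : ∀ i < k, ppt i ∈ A) (g : (Fin 3 → K) → K) :
    ∑ v ∈ A, tau a u k v * g v = ∑ j ∈ Finset.range u, a j * g (Opt j)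
      + ∑ i ∈ Finset.range k, g (ppt i) := by
  classical
  simp only [tau, add_mul, Finset.sum_add_distrib, Finset.sum_mul]
  rw [Finset.sum_comm, Finset.sum_comm (s := A) (t := Finset.range k)]
  congr 1
  · refine Finset.sum_congr rfl fun j hj => ?_
    simp [hO j (Finset.mem_range.1 hj)]
  · refine Finset.sum_congr rfl fun j hj => ?_
    simp [hp j (Finset.mem_range.1 hj)]

lemma tau_ne {a : ℕ → K} {u k : ℕ} {v : Fin 3 → K} (h : tau a u k v ≠ 0) :
    (∃ j < u, v = Opt j) ∨ (∃ i < k, v = ppt i) := by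
  by_contra! H
  apply h
  unfold tau
  rw [Finset.sum_eq_zero, Finset.sum_eq_zero, add_zero]
  · intro i hi; simp [H.2 i (Finset.mem_range.1 hi)]
  · intro i hi; simp [H.1 i (Finset.mem_range.1 hi)]

@[simp] lemma Opt0 (j : ℕ) : (Opt j : Fin 3 → K) 0 = 1 := rfl
@[simp] lemma Opt1 (j : ℕ) : (Opt j : Fin 3 → K) 1 = 0 := rfl
@[simp] lemma Opt2 (j : ℕ) : (Opt j : Fin 3 → K) 2 = j := rfl
@[simp] lemma ppt0 (j : ℕ) : (ppt j : Fin 3 → K) 0 = 0 := rfl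
@[simp] lemma ppt1 (j : ℕ) : (ppt j : Fin 3 → K) 1 = 1 := rfl
@[simp] lemma ppt2 (j : ℕ) : (ppt j : Fin 3 → K) 2 = j + 1 := rfl
@[simp] lemma ey0 : (ey : Fin 3 → K) 0 = 0 := rfl
@[simp] lemma ey1 : (ey : Fin 3 → K) 1 = 1 := rfl
@[simp] lemma ey2 : (ey : Fin 3 → K) 2 = 0 := rfl
@[simp] lemma ez0 : (ez : Fin 3 → K) 0 = 0 := rfl
@[simp] lemma ez1 : (ez : Fin 3 → K) 1 = 0 := rfl
@[simp] lemma ez2 : (ez : Fin 3 → K) 2 = 1 := rfl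

lemma ey_ne_ez : (ey : Fin 3 → K) ≠ ez := fun h => by
  have := congrFun h 1; simp at this

variable [CharZero K]

lemma Opt_inj : Function.Injective (Opt : ℕ → Fin 3 → K) := fun i j h => by
  have := congrFun h 2; simpa using this
lemma ppt_inj : Function.Injective (ppt : ℕ → Fin 3 → K) := fun i j h => by
  have := congrFun h 2; simpa using this
lemma Opt_ne_ppt (i j : ℕ) : (Opt i : Fin 3 → K) ≠ ppt j := fun h => by
  have := congrFun h 0; simp at this

lemma tau_Opt (a : ℕ → K) (u k : ℕ) {j : ℕ} (hj : j < u) : tau a u k (Opt j) = a j := by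
  classical
  unfold tau
  simp [Opt_ne_ppt, Opt_inj.eq_iff, hj]
lemma tau_ppt (a : ℕ → K) (u k : ℕ) {j : ℕ} (hj : j < k) : tau a u k (ppt j) = 1 := by
  classical
  unfold tau
  simp [(Opt_ne_ppt _ _).symm, ppt_inj.eq_iff, hj]
lemma tau_ey (a : ℕ → K) (u k : ℕ) : tau a u k ey = 0 := by
  by_contra h
  rcases tau_ne h with ⟨j, _, h⟩ | ⟨j, _, h⟩
  · have := congrFun h 0; simp at this
  · have := congrFun h 2; simp at this; norm_cast at this
lemma tau_ez (a : ℕ → K) (u k : ℕ) : tau a u k ez = 0 := by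
  by_contra h
  rcases tau_ne h with ⟨j, _, h⟩ | ⟨j, _, h⟩
  · have := congrFun h 0; simp at this
  · have := congrFun h 1; simp at this

lemma nrm_Opt (j : ℕ) : Nrm (Opt j : Fin 3 → K) := Or.inl rfl
lemma nrm_ppt (j : ℕ) : Nrm (ppt j : Fin 3 → K) := Or.inr (Or.inl ⟨rfl, rfl⟩)
lemma nrm_ey : Nrm (ey : Fin 3 → K) := Or.inr (Or.inl ⟨rfl, rfl⟩)
lemma nrm_ez : Nrm (ez : Fin 3 → K) := Or.inr (Or.inr ⟨rfl, rfl, rfl⟩)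

open Classical in
def cnt (S : Finset (Fin 3 → K)) (p : (Fin 3 → K) → Prop) : ℕ := (S.filter p).card

lemma le_cnt_add (S F X : Finset (Fin 3 → K)) (p : (Fin 3 → K) → Prop)
    (h : ∀ v ∈ F, (v ∈ S ∧ p v) ∨ v ∈ X) : F.card ≤ cnt S p + X.card := by
  classical
  unfold cnt
  refine le_trans (Finset.card_le_card ?_) (Finset.card_union_le _ _)
  intro v hv
  rw [Finset.mem_union, Finset.mem_filter]
  exact h v hv

lemma cnt_le (S : Finset (Fin 3 → K)) (p : (Fin 3 → K) → Prop) : cnt S p ≤ S.card := by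
  classical
  unfold cnt; exact Finset.card_filter_le _ _

lemma cnt_eq (S F : Finset (Fin 3 → K)) (p : (Fin 3 → K) → Prop)
    (h : ∀ v, v ∈ F ↔ v ∈ S ∧ p v) : F.card = cnt S p := by
  classical
  unfold cnt; congr 1; ext v; rw [h, Finset.mem_filter]

lemma three (S : Finset (Fin 3 → K)) (p q r : (Fin 3 → K) → Prop)
    (h1 : ∀ v ∈ S, p v → ¬ q v) (h2 : ∀ v ∈ S, p v → ¬ r v) (h3 : ∀ v ∈ S, q v → ¬ r v) :
    cnt S p + cnt S q + cnt S r ≤ S.card := by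
  classical
  unfold cnt
  rw [← Finset.card_union_of_disjoint, ← Finset.card_union_of_disjoint]
  · apply Finset.card_le_card
    intro v; simp; tauto
  · rw [Finset.disjoint_left]; intro v; simp; grind
  · rw [Finset.disjoint_left]; intro v; simp; grind

variable {A : Finset (Fin 3 → K)} {a : ℕ → K} {u k d : ℕ} {σ : (Fin 3 → K) → K}

lemma Rq (hO : ∀ j < u, Opt j ∈ A) (hp : ∀ i < k, ppt i ∈ A) (hy : ey ∈ A) (hz : ez ∈ A)
    (hP : ∀ h : P3 K, h.IsHomogeneous d → Pf a u k h = ∑ v ∈ A, σ v * eval v h)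
    {q : P3 K} {e t : ℕ} (hq : q.IsHomogeneous e) (hqy : eval ey q = 0) (hqz : eval ez q = 0)
    (ht : d = t + e) :
    Rel A t (fun v => eval v q * σ v - eval v q * tau a u k v - eval ey (pderiv 0 q) * dlt ey v
      - eval ez (pderiv 0 q) * dlt ez v) := by
  intro h hh
  have h1 := hP (q * h) (by rw [ht, add_comm]; exact hq.mul hh)
  have h2 := sum_tau (A := A) a u k hO hp (fun v => eval v q * eval v h)
  have h3 := sum_dlt hy (fun v => eval ey (pderiv 0 q) * eval v h)
  have h4 := sum_dlt hz (fun v => eval ez (pderiv 0 q) * eval v h)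
  simp only [Pf, Derivation.leibniz, map_add, smul_eq_mul, map_mul, hqy, hqz, zero_mul] at h1
  have h5 : ∑ v ∈ A, (eval v q * σ v - eval v q * tau a u k v - eval ey (pderiv 0 q) * dlt ey v
      - eval ez (pderiv 0 q) * dlt ez v) * eval v h
      = ∑ v ∈ A, σ v * (eval v q * eval v h) - ∑ v ∈ A, tau a u k v * (eval v q * eval v h)
       - ∑ v ∈ A, dlt ey v * (eval ey (pderiv 0 q) * eval v h)
       - ∑ v ∈ A, dlt ez v * (eval ez (pderiv 0 q) * eval v h) := by
    simp only [← Finset.sum_sub_distrib]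
    refine Finset.sum_congr rfl fun v _ => ?_
    ring
  rw [h5, h2, h3, h4, ← h1]
  ring

end S18
end LowerBound

open MvPolynomial
set_option linter.unusedSectionVars false

noncomputable section CoreLB
namespace S18
variable {K : Type} [Field K] [CharZero K]
variable {A : Finset (Fin 3 → K)} {a : ℕ → K} {u k d : ℕ} {σ : (Fin 3 → K) → K}

open Classical in
def OO (K : Type) [Field K] (u : ℕ) : Finset (Fin 3 → K) := (Finset.range u).image Opt
open Classical in
def OP (K : Type) [Field K] (u : ℕ) : Finset (Fin 3 → K) := (Finset.Ioo 0 u).image Opt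
open Classical in
def PP (K : Type) [Field K] (k : ℕ) : Finset (Fin 3 → K) := (Finset.range k).image ppt

lemma card_OO : (OO K u).card = u := by
  simp [OO, Finset.card_image_of_injective _ Opt_inj]
lemma card_PP : (PP K k).card = k := by
  simp [PP, Finset.card_image_of_injective _ ppt_inj]
lemma card_OP : (OP K u).card = u - 1 := by
  simp [OP, Finset.card_image_of_injective _ Opt_inj]

lemma tau_ne' {v : Fin 3 → K} (h : tau a u k v ≠ 0) :
    (v 0 = 1 ∧ v 1 = 0 ∧ v ∈ OO K u ∧ (v 2 ≠ 0 → v ∈ OP K u)) ∨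
    (v 0 = 0 ∧ v 1 = 1 ∧ v ∈ PP K k) := by
  classical
  rcases tau_ne h with ⟨j, hj, rfl⟩ | ⟨j, hj, rfl⟩
  · left
    refine ⟨rfl, rfl, Finset.mem_image_of_mem _ (Finset.mem_range.2 hj), fun h => ?_⟩
    apply Finset.mem_image_of_mem
    simp only [Opt2, ne_eq, Nat.cast_eq_zero] at h
    simp; omega
  · right
    exact ⟨rfl, rfl, Finset.mem_image_of_mem _ (Finset.mem_range.2 hj)⟩

lemma ne_of_coord (v : Fin 3 → K) (i : Fin 3) (c : Fin 3 → K) (h : v i ≠ c i) : v ≠ c :=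
  fun e => h (by rw [e])

variable (hO : ∀ j < u, Opt j ∈ A) (hp : ∀ i < k, ppt i ∈ A) (hy : ey ∈ A) (hz : ez ∈ A)
    (hA : ∀ v ∈ A, Nrm v)
    (hP : ∀ h : P3 K, h.IsHomogeneous d → Pf a u k h = ∑ v ∈ A, σ v * eval v h)

include hO hp hy hz hA hP

/-- General counting: if the relation for `q` is nonzero then its support is large. -/
lemma count {q : P3 K} {e t : ℕ} (hq : q.IsHomogeneous e) (hqy : eval ey q = 0)
    (hqz : eval ez q = 0) (ht : d = t + e) (X : Finset (Fin 3 → K))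
    (hX1 : ∀ v, eval v q * tau a u k v ≠ 0 → v ∈ X)
    (hX2 : eval ey (pderiv 0 q) ≠ 0 → ey ∈ X) (hX3 : eval ez (pderiv 0 q) ≠ 0 → ez ∈ X)
    (hne : ∃ v ∈ A, eval v q * σ v - eval v q * tau a u k v - eval ey (pderiv 0 q) * dlt ey v
      - eval ez (pderiv 0 q) * dlt ez v ≠ 0) :
    t + 2 ≤ cnt (supp A σ) (fun v => eval v q ≠ 0) + X.card := by
  classical
  obtain ⟨v, hv, hv'⟩ := hne
  have h1 := T1 hA t _ (Rq hO hp hy hz hP hq hqy hqz ht) ⟨v, mem_supp.2 ⟨hv, hv'⟩⟩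
  refine h1.trans (le_cnt_add _ _ _ _ ?_)
  intro w hw
  rw [mem_supp] at hw
  rw [mem_supp]
  by_contra hcon
  push Not at hcon
  obtain ⟨hc1, hc2⟩ := hcon
  apply hw.2
  have e1 : eval w q * σ w = 0 := by
    by_cases h : σ w = 0
    · simp [h]
    · rw [hc1 ⟨hw.1, h⟩, zero_mul]
  have e2 : eval w q * tau a u k w = 0 := by
    by_contra h; exact hc2 (hX1 w h)
  have e3 : eval ey (pderiv 0 q) * dlt ey w = 0 := by
    by_cases h : w = ey
    · subst h
      by_contra h'; exact hc2 (hX2 (left_ne_zero_of_mul h'))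
    · rw [dlt_ne h, mul_zero]
  have e4 : eval ez (pderiv 0 q) * dlt ez w = 0 := by
    by_cases h : w = ez
    · subst h
      by_contra h'; exact hc2 (hX3 (left_ne_zero_of_mul h'))
    · rw [dlt_ne h, mul_zero]
  rw [e1, e2, e3, e4]; simp

/-- Nonzero at ey. -/
lemma count_y {q : P3 K} {e t : ℕ} (hq : q.IsHomogeneous e) (hqy : eval ey q = 0)
    (hqz : eval ez q = 0) (ht : d = t + e) (X : Finset (Fin 3 → K))
    (hX1 : ∀ v, eval v q * tau a u k v ≠ 0 → v ∈ X)
    (hX2 : ey ∈ X) (hX3 : eval ez (pderiv 0 q) ≠ 0 → ez ∈ X)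
    (hne : eval ey (pderiv 0 q) ≠ 0) :
    t + 2 ≤ cnt (supp A σ) (fun v => eval v q ≠ 0) + X.card := by
  refine count hO hp hy hz hA hP hq hqy hqz ht X hX1 (fun _ => hX2) hX3 ⟨ey, hy, ?_⟩
  rw [hqy, dlt_self, dlt_ne ey_ne_ez]; simpa using hne

lemma count_z {q : P3 K} {e t : ℕ} (hq : q.IsHomogeneous e) (hqy : eval ey q = 0)
    (hqz : eval ez q = 0) (ht : d = t + e) (X : Finset (Fin 3 → K))
    (hX1 : ∀ v, eval v q * tau a u k v ≠ 0 → v ∈ X)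
    (hX2 : eval ey (pderiv 0 q) ≠ 0 → ey ∈ X) (hX3 : ez ∈ X)
    (hne : eval ez (pderiv 0 q) ≠ 0) :
    t + 2 ≤ cnt (supp A σ) (fun v => eval v q ≠ 0) + X.card := by
  refine count hO hp hy hz hA hP hq hqy hqz ht X hX1 hX2 (fun _ => hX3) ⟨ez, hz, ?_⟩
  rw [hqz, dlt_self, dlt_ne ey_ne_ez.symm]; simpa using hne

lemma case0 (hu : 1 ≤ u) (hd : 2 * u + 2 * k + 10 ≤ d)
    (h0 : ∀ v ∈ supp A σ, v 0 * v 1 * v 2 = 0) : 2 * d + k ≤ (supp A σ).card + u + 1 := by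
  classical
  have hX : ∀ i j : Fin 3, (X i * X j : P3 K).IsHomogeneous 2 := fun i j =>
    (isHomogeneous_X K i).mul (isHomogeneous_X K j)
  have c1 := count_y (q := X 0 * X 1) hO hp hy hz hA hP (hX 0 1) (by simp) (by simp)
    (show d = (d - 2) + 2 by omega) {ey}
    (by
      intro v hv
      exfalso
      have := tau_ne' (right_ne_zero_of_mul hv)
      simp at hv
      grind) (by simp) (by simp) (by simp)
  have c2 := count_z (q := X 0 * X 2) hO hp hy hz hA hP (hX 0 2) (by simp) (by simp)
    (show d = (d - 2) + 2 by omega) (insert ez (OP K u))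
    (by
      intro v hv
      have := tau_ne' (right_ne_zero_of_mul hv)
      simp at hv
      simp
      grind) (by simp) (by simp) (by simp)
  have c2' := Finset.card_insert_le (ez : Fin 3 → K) (OP K u)
  rw [card_OP] at c2'
  rw [Finset.card_singleton] at c1
  have h3 := three (supp A σ) (fun v => eval v (X 0 * X 1) ≠ 0) (fun v => eval v (X 0 * X 2) ≠ 0)
    (fun v => eval v (X 1 * X 2) ≠ 0)
    (by intro v hv; have := h0 v hv; simp at this ⊢; grind)
    (by intro v hv; have := h0 v hv; simp at this ⊢; grind)
    (by intro v hv; have := h0 v hv; simp at this ⊢; grind)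
  by_cases hne : ∃ v ∈ A, eval v (X 1 * X 2 : P3 K) * σ v - eval v (X 1 * X 2 : P3 K) * tau a u k v - eval ey (pderiv 0 (X 1 * X 2 : P3 K)) * dlt ey v
      - eval ez (pderiv 0 (X 1 * X 2 : P3 K)) * dlt ez v ≠ 0
  · have c3 := count (q := X 1 * X 2) hO hp hy hz hA hP (hX 1 2) (by simp) (by simp)
      (show d = (d - 2) + 2 by omega) (PP K k)
      (by
        intro v hv
        have := tau_ne' (right_ne_zero_of_mul hv)
        simp at hv
        grind) (by simp) (by simp) hne
    rw [card_PP] at c3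
    omega
  · push Not at hne
    have c4 := le_cnt_add (supp A σ) (PP K k) ∅ (fun v => eval v (X 1 * X 2 : P3 K) ≠ 0) (by
      intro v hv
      left
      obtain ⟨i, hi, rfl⟩ := Finset.mem_image.1 hv
      have hi' := Finset.mem_range.1 hi
      have h := hne _ (hp i hi')
      rw [tau_ppt a u k hi'] at h
      have h2 : ((i : K) + 1) ≠ 0 := by norm_cast
      simp at h
      simp [mem_supp, hp i hi', h2]
      intro h4
      rw [h4] at h
      apply h2
      linear_combination -h)
    rw [card_PP, Finset.card_empty] at c4
    omega

lemma case1 (hu : 1 ≤ u) (hd : 2 * u + 2 * k + 10 ≤ d)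
    (w : Fin 3 → K) (v0 : Fin 3 → K) (hv0 : v0 ∈ supp A σ) (hv0' : v0 0 * v0 1 * v0 2 ≠ 0)
    (h0 : ∀ v ∈ supp A σ, v 0 * v 1 * v 2 ≠ 0 → eval v (lin w) = 0) (hw : w ≠ 0)
    (h1 : d - 1 ≤ cnt (supp A σ) (fun v => v 0 * v 1 * v 2 ≠ 0)) :
    2 * d + k ≤ (supp A σ).card + u + 1 := by
  classical
  have hX2 : ∀ i j : Fin 3, (X i * X j * lin w : P3 K).IsHomogeneous 3 := fun i j =>
    ((isHomogeneous_X K i).mul (isHomogeneous_X K j)).mul (hom_lin w)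
  have hX1 : ∀ i : Fin 3, (X i * lin w : P3 K).IsHomogeneous 2 := fun i =>
    (isHomogeneous_X K i).mul (hom_lin w)
  have hpd : pderiv 0 (lin w) = C (w 0) := by
    simp [lin, pderiv_X]
  have hm := h0 v0 hv0 hv0'
  rw [eval_lin] at hm
  have c1 : w 1 ≠ 0 → d - 3 + 2 ≤ cnt (supp A σ) (fun v => eval v (X 0 * X 1 * lin w) ≠ 0) + 1 := by
    intro hw1
    have := count_y (q := X 0 * X 1 * lin w) hO hp hy hz hA hP (hX2 0 1) (by simp) (by simp)
      (show d = (d - 3) + 3 by omega) {ey}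
      (by
        intro v hv
        exfalso
        have := tau_ne' (right_ne_zero_of_mul hv)
        simp at hv
        grind) (by simp) (by simp) (by simp [eval_lin, hw1])
    simpa using this
  have c2 : w 2 ≠ 0 → d - 3 + 2 ≤ cnt (supp A σ) (fun v => eval v (X 0 * X 2 * lin w) ≠ 0)
      + ((u - 1) + 1) := by
    intro hw2
    have c2 := count_z (q := X 0 * X 2 * lin w) hO hp hy hz hA hP (hX2 0 2) (by simp) (by simp)
      (show d = (d - 3) + 3 by omega) (insert ez (OP K u))
      (by
        intro v hv
        have := tau_ne' (right_ne_zero_of_mul hv)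
        simp at hv
        simp
        grind) (by simp) (by simp) (by simp [eval_lin, hw2])
    have c2' := Finset.card_insert_le (ez : Fin 3 → K) (OP K u)
    rw [card_OP] at c2'
    omega
  by_cases hw1 : w 1 = 0
  · by_cases hw2 : w 2 = 0
    · exfalso
      apply hw
      have : w 0 = 0 := by grind
      funext i; fin_cases i <;> simpa
    · have c2 := c2 hw2
      have hw0 : w 0 ≠ 0 := by grind
      have c3 := count_y (q := X 1 * lin w) hO hp hy hz hA hP (hX1 1) (by simp [eval_lin, hw1])
        (by simp)
        (show d = (d - 2) + 2 by omega) (insert ey (PP K k))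
        (by
          intro v hv
          have := tau_ne' (right_ne_zero_of_mul hv)
          simp at hv
          simp
          grind) (by simp) (by simp [hpd]) (by simp [hpd, hw0])
      have c3' := Finset.card_insert_le (ey : Fin 3 → K) (PP K k)
      rw [card_PP] at c3'
      have h3 := three (supp A σ) (fun v => v 0 * v 1 * v 2 ≠ 0)
        (fun v => eval v (X 0 * X 2 * lin w) ≠ 0)
        (fun v => eval v (X 1 * lin w) ≠ 0)
        (by intro v hv h; have := h0 v hv h; simp [this])
        (by intro v hv h; have := h0 v hv h; simp [this])
        (by intro v hv h; have := h0 v hv; simp at this h ⊢; grind)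
      omega
  · have c1 := c1 hw1
    by_cases hw2 : w 2 = 0
    · have hw0 : w 0 ≠ 0 := by grind
      have c3 := count_z (q := X 2 * lin w) hO hp hy hz hA hP (hX1 2) (by simp)
        (by simp [eval_lin, hw2])
        (show d = (d - 2) + 2 by omega) (insert ez (OP K u ∪ PP K k))
        (by
          intro v hv
          have := tau_ne' (right_ne_zero_of_mul hv)
          simp at hv
          simp
          grind) (by simp [hpd]) (by simp) (by simp [hpd, hw0])
      have c3' := Finset.card_insert_le (ez : Fin 3 → K) (OP K u ∪ PP K k)
      have c3'' := Finset.card_union_le (OP K u) (PP K k)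
      rw [card_PP, card_OP] at c3''
      have h3 := three (supp A σ) (fun v => v 0 * v 1 * v 2 ≠ 0)
        (fun v => eval v (X 0 * X 1 * lin w) ≠ 0)
        (fun v => eval v (X 2 * lin w) ≠ 0)
        (by intro v hv h; have := h0 v hv h; simp [this])
        (by intro v hv h; have := h0 v hv h; simp [this])
        (by intro v hv h; have := h0 v hv; simp at this h ⊢; grind)
      omega
    · have c2 := c2 hw2
      have h3 := three (supp A σ) (fun v => v 0 * v 1 * v 2 ≠ 0)
        (fun v => eval v (X 0 * X 1 * lin w) ≠ 0)
        (fun v => eval v (X 0 * X 2 * lin w) ≠ 0)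
        (by intro v hv h; have := h0 v hv h; simp [this])
        (by intro v hv h; have := h0 v hv h; simp [this])
        (by intro v hv h; have := h0 v hv; simp at this h ⊢; grind)
      omega

lemma case2 (ha : ∀ j < u, a j ≠ 0) (hu : 1 ≤ u) (hd : 2 * u + 2 * k + 10 ≤ d)
    (c : Fin 6 → K) (v0 : Fin 3 → K) (hv0 : v0 ∈ supp A σ) (hv0' : v0 0 * v0 1 * v0 2 ≠ 0)
    (h0 : ∀ v ∈ supp A σ, v 0 * v 1 * v 2 ≠ 0 → eval v (quad c) = 0) (hc : c ≠ 0)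
    (h1 : 2 * d - 4 ≤ cnt (supp A σ) (fun v => v 0 * v 1 * v 2 ≠ 0)) :
    2 * d + k ≤ (supp A σ).card + u + 1 := by
  classical
  by_contra hlt
  have hpd : ∀ v, eval v (pderiv 0 (quad c)) = 2 * c 0 * v 0 + c 3 * v 1 + c 4 * v 2 := by
    intro v
    simp [quad, pderiv_X]; ring
  have hcnt : cnt (supp A σ) (fun v => eval v (quad c) ≠ 0) + u ≤ k + 2 := by
    have h3 := three (supp A σ) (fun v => v 0 * v 1 * v 2 ≠ 0)
      (fun v => eval v (quad c) ≠ 0) (fun _ => False)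
      (by intro v hv h; have := h0 v hv h; simp [this]) (by simp) (by simp)
    omega
  have hcnt' : cnt (supp A σ) (fun v => eval v (X 0 * quad c) ≠ 0) + u ≤ k + 2 := by
    have h3 := three (supp A σ) (fun v => v 0 * v 1 * v 2 ≠ 0)
      (fun v => eval v (X 0 * quad c) ≠ 0) (fun _ => False)
      (by intro v hv h; have := h0 v hv h; simp [this]) (by simp) (by simp)
    omega
  -- step 1
  have hq1 : (X 0 * quad c : P3 K).IsHomogeneous 3 := (isHomogeneous_X K 0).mul (hom_quad c)
  have s1 : ∀ v ∈ A, eval v (X 0 * quad c) * σ v - eval v (X 0 * quad c) * tau a u k v -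
      eval ey (pderiv 0 (X 0 * quad c)) * dlt ey v -
      eval ez (pderiv 0 (X 0 * quad c)) * dlt ez v = 0 := by
    intro v hv
    by_contra hne
    have := count (q := X 0 * quad c) hO hp hy hz hA hP hq1 (by simp) (by simp)
      (show d = (d - 3) + 3 by omega) (insert ey (insert ez (OO K u)))
      (by
        intro v hv
        have := tau_ne' (right_ne_zero_of_mul hv)
        simp at hv
        simp
        grind) (by simp) (by simp) ⟨v, hv, hne⟩
    have e1 := Finset.card_insert_le (ez : Fin 3 → K) (OO K u)
    have e2 := Finset.card_insert_le (ey : Fin 3 → K) (insert ez (OO K u))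
    rw [card_OO] at e1
    omega
  have qy := s1 ey hy
  have qz := s1 ez hz
  rw [dlt_self, dlt_ne ey_ne_ez] at qy
  rw [dlt_self, dlt_ne ey_ne_ez.symm] at qz
  simp at qy qz
  -- step 2
  have s2 : ∀ v ∈ A, eval v (quad c) * σ v - eval v (quad c) * tau a u k v -
      eval ey (pderiv 0 (quad c)) * dlt ey v - eval ez (pderiv 0 (quad c)) * dlt ez v = 0 := by
    intro v hv
    by_contra hne
    have := count (q := quad c) hO hp hy hz hA hP (hom_quad c) qy qz
      (show d = (d - 2) + 2 by omega) (insert ey (insert ez (OO K u ∪ PP K k)))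
      (by
        intro v hv
        have := tau_ne' (right_ne_zero_of_mul hv)
        simp
        grind) (by simp) (by simp) ⟨v, hv, hne⟩
    have e1 := Finset.card_insert_le (ez : Fin 3 → K) (OO K u ∪ PP K k)
    have e2 := Finset.card_insert_le (ey : Fin 3 → K) (insert ez (OO K u ∪ PP K k))
    have e3 := Finset.card_union_le (OO K u) (PP K k)
    rw [card_OO, card_PP] at e3
    omega
  have dy := s2 ey hy
  have dz := s2 ez hz
  rw [dlt_self, dlt_ne ey_ne_ez, qy, hpd] at dy
  rw [dlt_self, dlt_ne ey_ne_ez.symm, qz, hpd, hpd] at dz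
  rw [eval_quad] at qy qz
  simp at dy dz qy qz
  have hq : ∀ v, eval v (quad c) = c 0 * (v 0 * v 0) + c 5 * (v 1 * v 2) := by
    intro v; rw [eval_quad, dy, dz, qy, qz]; ring
  have hv1 := h0 v0 hv0 hv0'
  rw [hq] at hv1
  have hc0 : c 0 ≠ 0 := by
    intro h
    have h5 : c 5 = 0 := by grind
    apply hc; funext i; fin_cases i <;> simpa
  have hc5 : c 5 ≠ 0 := by grind
  have s3 : ∀ v ∈ A, eval v (quad c) * (σ v - tau a u k v) = 0 := by
    intro v hv
    have := s2 v hv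
    rw [hpd, hpd] at this
    simp [dy, dz] at this
    linear_combination this
  have hσO : ∀ j < u, σ (Opt j) = a j := by
    intro j hj
    have := s3 _ (hO j hj)
    rw [hq, tau_Opt a u k hj] at this
    simp [hc0] at this
    linear_combination this
  have hσp : ∀ j < k, σ (ppt j) = 1 := by
    intro j hj
    have := s3 _ (hp j hj)
    have h2 : ((j : K) + 1) ≠ 0 := by norm_cast
    rw [hq, tau_ppt a u k hj] at this
    simp [hc5, h2] at this
    linear_combination this
  -- step 3
  have hR := Rq (q := X 0) (t := d - 1) hO hp hy hz hP (isHomogeneous_X K 0) (by simp) (by simp)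
    (by omega)
  set μ : (Fin 3 → K) → K := fun v => eval v (X 0 : P3 K) * σ v -
    eval v (X 0 : P3 K) * tau a u k v -
      eval ey (pderiv 0 (X 0 : P3 K)) * dlt ey v - eval ez (pderiv 0 (X 0 : P3 K)) * dlt ez v with hμ
  have hμ' : ∀ v, μ v = v 0 * (σ v - tau a u k v) - dlt ey v - dlt ez v := by
    intro v; simp [hμ]; ring
  have my : ey ∈ supp A μ := by
    rw [mem_supp, hμ', dlt_self, dlt_ne ey_ne_ez]; simp [hy]
  have mz : ez ∈ supp A μ := by
    rw [mem_supp, hμ', dlt_self, dlt_ne ey_ne_ez.symm]; simp [hz]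
  have hbig : 2 * (d - 1) + 2 ≤ (supp A μ).card := by
    by_contra hsm
    obtain ⟨w, hw, hw'⟩ := T2 hA _ μ hR (by omega)
    have w1 := hw' ey my
    have w2 := hw' ez mz
    rw [eval_lin] at w1 w2
    simp at w1 w2
    have w0 : w 0 ≠ 0 := by
      intro h; apply hw; funext i; fin_cases i <;> simpa
    have t1 := T1 hA _ μ hR ⟨_, my⟩
    have hsub : supp A μ ⊆ {ey, ez} := by
      intro v hv
      have e := hw' v hv
      rw [eval_lin] at e
      simp [w1, w2, w0] at e
      by_contra hv'
      simp at hv'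
      have := (mem_supp.1 hv).2
      rw [hμ', e, dlt_ne hv'.1, dlt_ne hv'.2] at this
      simp at this
    have := Finset.card_le_card hsub
    have := Finset.card_le_two (a := (ey : Fin 3 → K)) (b := ez)
    omega
  have k1 := le_cnt_add (supp A σ) (supp A μ) {ey, ez} (fun v => σ v ≠ tau a u k v) (by
    intro v hv
    by_contra hcon
    push Not at hcon
    have h1 := hcon.2
    simp at h1
    have h2 := (mem_supp.1 hv).2
    rw [hμ', dlt_ne h1.1, dlt_ne h1.2] at h2
    by_cases h3 : σ v = 0
    · by_cases h4 : tau a u k v = 0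
      · simp [h3, h4] at h2
      · rcases tau_ne h4 with ⟨j, hj, rfl⟩ | ⟨j, hj, rfl⟩
        · exact ha j hj (by rw [← hσO j hj, h3])
        · simp [hσp j hj] at h3
    · rw [hcon.1 (mem_supp.2 ⟨(mem_supp.1 hv).1, h3⟩)] at h2
      simp at h2)
  have k2 := le_cnt_add (supp A σ) (OO K u) ∅ (fun v => σ v = tau a u k v ∧ v 0 = 1) (by
    intro v hv
    left
    obtain ⟨j, hj, rfl⟩ := Finset.mem_image.1 hv
    have hj := Finset.mem_range.1 hj
    simp [mem_supp, hO j hj, hσO j hj, ha j hj, tau_Opt a u k hj])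
  have k3 := le_cnt_add (supp A σ) (PP K k) ∅ (fun v => σ v = tau a u k v ∧ v 0 = 0) (by
    intro v hv
    left
    obtain ⟨j, hj, rfl⟩ := Finset.mem_image.1 hv
    have hj := Finset.mem_range.1 hj
    simp [mem_supp, hp j hj, hσp j hj, tau_ppt a u k hj])
  have h3 := three (supp A σ) (fun v => σ v ≠ tau a u k v)
    (fun v => σ v = tau a u k v ∧ v 0 = 1) (fun v => σ v = tau a u k v ∧ v 0 = 0)
    (by intro v _ h h'; exact h h'.1) (by intro v _ h h'; exact h h'.1)
    (by intro v _ h h'; rw [h.2] at h'; exact one_ne_zero h'.2)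
  have := Finset.card_le_two (a := (ey : Fin 3 → K)) (b := ez)
  rw [card_OO, Finset.card_empty] at k2
  rw [card_PP, Finset.card_empty] at k3
  omega

theorem coreLB (ha : ∀ j < u, a j ≠ 0) (hu : 1 ≤ u) (hd : 2 * u + 2 * k + 10 ≤ d) :
    2 * d + k ≤ (supp A σ).card + u + 1 := by
  classical
  by_contra hlt
  have hq1 : (X 0 * X 1 * X 2 : P3 K).IsHomogeneous 3 :=
    ((isHomogeneous_X K 0).mul (isHomogeneous_X K 1)).mul (isHomogeneous_X K 2)
  have hR : Rel A (d - 3) (fun v => v 0 * v 1 * v 2 * σ v) := by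
    have := Rq (q := X 0 * X 1 * X 2) (t := d - 3) hO hp hy hz hP hq1 (by simp) (by simp)
      (by omega)
    convert this using 2 with v
    have : v 0 * v 1 * v 2 * tau a u k v = 0 := by
      by_contra h
      have := tau_ne' (right_ne_zero_of_mul h)
      grind
    simp [this]
  have hmem : ∀ v, v ∈ supp A (fun v => v 0 * v 1 * v 2 * σ v) ↔
      v ∈ supp A σ ∧ v 0 * v 1 * v 2 ≠ 0 := by
    intro v; rw [mem_supp, mem_supp]; simp; tauto
  have hcard : (supp A (fun v => v 0 * v 1 * v 2 * σ v)).card =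
      cnt (supp A σ) (fun v => v 0 * v 1 * v 2 ≠ 0) := by
    exact cnt_eq _ _ _ hmem
  have hle : cnt (supp A σ) (fun v => v 0 * v 1 * v 2 ≠ 0) ≤ (supp A σ).card := by
    exact cnt_le _ _
  rcases (supp A (fun v => v 0 * v 1 * v 2 * σ v)).eq_empty_or_nonempty with h | h
  · apply hlt
    refine case0 hO hp hy hz hA hP hu hd fun v hv => ?_
    by_contra hv'
    have := (hmem v).2 ⟨hv, hv'⟩
    simp [h] at this
  · have t1 := T1 hA _ _ hR h
    obtain ⟨v0, hv0⟩ := h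
    have hv0' := (hmem v0).1 hv0
    by_cases hs : (supp A (fun v => v 0 * v 1 * v 2 * σ v)).card ≤ 2 * (d - 3) + 1
    · obtain ⟨w, hw, hw'⟩ := T2 hA _ _ hR hs
      exact hlt (case1 hO hp hy hz hA hP hu hd w v0 hv0'.1 hv0'.2
        (fun v hv h => hw' v ((hmem v).2 ⟨hv, h⟩)) hw (by omega))
    · obtain ⟨c, hc, hc'⟩ := T3 hA _ _ _ le_rfl hR (by omega)
      exact hlt (case2 hO hp hy hz hA hP ha hu hd c v0 hv0'.1 hv0'.2
        (fun v hv h => hc' v ((hmem v).2 ⟨hv, h⟩)) hc (by omega))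

end S18
end CoreLB

open MvPolynomial
set_option linter.unusedSectionVars false

noncomputable section Reps
namespace S18
variable {K : Type} [Field K]

lemma eval_smul_hom {σ : Type} [Fintype σ] {h : MvPolynomial σ K} {d : ℕ} (hh : h.IsHomogeneous d)
    (c : K) (v : σ → K) : eval (c • v) h = c ^ d * eval v h := by
  rw [eval_eq, eval_eq, Finset.mul_sum]
  refine Finset.sum_congr rfl fun e he => ?_
  have h1 := hh.degree_eq_sum_deg_support he
  have h2 : ∏ i ∈ e.support, c ^ e i = c ^ d := by
    rw [Finset.prod_pow_eq_pow_sum, h1]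
  simp only [Pi.smul_apply, smul_eq_mul, mul_pow, Finset.prod_mul_distrib, h2]
  ring

lemma nrm_ex (v : Fin 3 → K) : ∃ (c : K) (n : Fin 3 → K), Nrm n ∧ v = c • n := by
  by_cases h0 : v 0 = 0
  · by_cases h1 : v 1 = 0
    · by_cases h2 : v 2 = 0
      · refine ⟨0, ey, nrm_ey', ?_⟩
        funext i; fin_cases i <;> simpa
      · refine ⟨v 2, (v 2)⁻¹ • v, Or.inr (Or.inr (by simp [h0, h1, h2])), ?_⟩
        simp [h2]
    · refine ⟨v 1, (v 1)⁻¹ • v, Or.inr (Or.inl (by simp [h0, h1])), ?_⟩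
      simp [h1]
  · refine ⟨v 0, (v 0)⁻¹ • v, Or.inl (by simp [h0]), ?_⟩
    simp [h0]
where
  nrm_ey' : Nrm (ey : Fin 3 → K) := Or.inr (Or.inl ⟨rfl, rfl⟩)

/-- `L` is a combination of `n` evaluations in degree `d`. -/
def Rep (d n : ℕ) (L : P3 K → K) : Prop :=
  ∃ (c : Fin n → K) (v : Fin n → Fin 3 → K), ∀ h : P3 K, h.IsHomogeneous d →
    L h = ∑ i, c i * eval (v i) h

lemma Rep.add {d n n' : ℕ} {L L' : P3 K → K} (h : Rep d n L) (h' : Rep d n' L') :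
    Rep d (n + n') (fun g => L g + L' g) := by
  obtain ⟨c, v, h⟩ := h
  obtain ⟨c', v', h'⟩ := h'
  refine ⟨Fin.append c c', Fin.append v v', fun g hg => ?_⟩
  beta_reduce
  rw [h g hg, h' g hg, Fin.sum_univ_add]
  simp

lemma Rep.finset {ι : Type} (d : ℕ) (S : Finset ι) (c : ι → K) (v : ι → Fin 3 → K) :
    Rep d S.card (fun g => ∑ i ∈ S, c i * eval (v i) g) := by
  refine ⟨fun i => c (S.equivFin.symm i), fun i => v (S.equivFin.symm i), fun g _ => ?_⟩
  exact (Finset.sum_coe_sort S (fun i => c i * eval (v i) g)).symm.trans (Equiv.sum_comp S.equivFin.symm (fun i : S => c i * eval (v i) g)).symm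

lemma Rep.congr {d n n' : ℕ} {L L' : P3 K → K} (h : Rep d n L)
    (e : ∀ g : P3 K, g.IsHomogeneous d → L' g = L g) (hn : n = n') : Rep d n' L' := by
  subst hn
  obtain ⟨c, v, h⟩ := h
  exact ⟨c, v, fun g hg => by rw [e g hg, h g hg]⟩

theorem Rep.LB [CharZero K] {d n u k : ℕ} {a : ℕ → K} (h : Rep d n (Pf a u k))
    (ha : ∀ j < u, a j ≠ 0) (hu : 1 ≤ u) (hd : 2 * u + 2 * k + 10 ≤ d) :
    2 * d + k ≤ n + u + 1 := by
  classical
  obtain ⟨c, v, h⟩ := h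
  choose l w hw hv using fun i => nrm_ex (v i)
  set B : Finset (Fin 3 → K) := Finset.univ.image w
  set A : Finset (Fin 3 → K) := B ∪ ({ey, ez} ∪ (OO K u ∪ PP K k)) with hA
  set σ : (Fin 3 → K) → K := fun x => ∑ i, if x = w i then c i * l i ^ d else 0 with hσ
  have hP : ∀ g : P3 K, g.IsHomogeneous d → Pf a u k g = ∑ x ∈ A, σ x * eval x g := by
    intro g hg
    rw [h g hg]
    simp only [hσ, Finset.sum_mul]
    rw [Finset.sum_comm]
    refine Finset.sum_congr rfl fun i _ => ?_
    have : w i ∈ A := by simp [hA, B]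
    simp only [ite_mul, zero_mul, Finset.sum_ite_eq', this, if_true]
    rw [hv i, eval_smul_hom hg]; ring
  have := coreLB (A := A) (σ := σ) (a := a) (u := u) (k := k) (d := d)
    (fun j hj => by simp only [hA, Finset.mem_union, OO, Finset.mem_image]; right; right; left; exact ⟨j, Finset.mem_range.2 hj, rfl⟩)
    (fun j hj => by simp only [hA, Finset.mem_union, PP, Finset.mem_image]; right; right; right; exact ⟨j, Finset.mem_range.2 hj, rfl⟩)
    (by simp [hA]) (by simp [hA])
    (by
      intro x hx
      simp only [hA, B, OO, PP, Finset.mem_union, Finset.mem_image, Finset.mem_insert,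
        Finset.mem_singleton] at hx
      rcases hx with ⟨i, _, rfl⟩ | (rfl | rfl) | ⟨j, _, rfl⟩ | ⟨j, _, rfl⟩
      · exact hw i
      · exact nrm_ey
      · exact nrm_ez
      · exact nrm_Opt _
      · exact nrm_ppt _)
    hP ha hu hd
  have h2 : (supp A σ).card ≤ n := by
    have : supp A σ ⊆ B := by
      intro x hx
      have hx := (mem_supp.1 hx).2
      by_contra hxB
      apply hx
      refine Finset.sum_eq_zero fun i _ => if_neg ?_
      rintro rfl
      exact hxB (by simp [B])
    refine (Finset.card_le_card this).trans (Finset.card_image_le.trans (by simp))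
  omega

lemma T1' {ι : Type} [Fintype ι] (p : ι → Fin 3 → K) (hp : Function.Injective p)
    (hn : ∀ i, Nrm (p i)) {t : ℕ} (ht : Fintype.card ι < t + 2) (c : ι → K)
    (h : ∀ g : P3 K, g.IsHomogeneous t → ∑ i, c i * eval (p i) g = 0) : c = 0 := by
  classical
  set A : Finset (Fin 3 → K) := Finset.univ.image p with hA
  set μ : (Fin 3 → K) → K := fun x => ∑ i, if x = p i then c i else 0 with hμ
  have hμp : ∀ i, μ (p i) = c i := by intro i; simp [hμ, hp.eq_iff]
  have hR : Rel A t μ := by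
    intro g hg
    rw [hA, Finset.sum_image (fun _ _ _ _ h => hp h), ← h g hg]
    simp [hμp]
  by_contra hc
  obtain ⟨i, hi⟩ := Function.ne_iff.1 hc
  have := T1 (A := A) (by simp [hA, hn]) t μ hR ⟨p i, mem_supp.2 ⟨by simp [hA], by rw [hμp]; exact hi⟩⟩
  have h2 : (supp A μ).card ≤ A.card := Finset.card_le_card (by unfold supp; exact Finset.filter_subset _ _)
  have h3 : A.card ≤ Fintype.card ι := Finset.card_image_le
  omega

end S18
end Reps

open MvPolynomial
set_option linter.unusedSectionVars false

noncomputable section Upper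
namespace S18
variable {K : Type} [Field K]

/-- divided differences on nodes with zero sum -/
lemma divdiff [DecidableEq K] (N : Finset K) {d : ℕ} (hN : N.card = d) (hd : 0 < d) (hs : ∑ t ∈ N, t = 0)
    (g : Polynomial K) (hg : g.natDegree ≤ d) :
    g.coeff (d - 1) = ∑ t ∈ N, (∏ j ∈ N.erase t, (t - j))⁻¹ * g.eval t := by
  classical
  set w : Polynomial K := ∏ t ∈ N, (Polynomial.X - Polynomial.C t) with hw
  have hwm : w.Monic := Polynomial.monic_prod_X_sub_C _ _
  have hwd : w.natDegree = d := by rw [hw, Polynomial.natDegree_finsetProd_X_sub_C_eq_card, hN]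
  have hwc : w.coeff (d - 1) = 0 := by
    have := Polynomial.prod_X_sub_C_coeff_card_pred N (fun t : K => t) (by omega)
    rw [hN, hs, neg_zero] at this
    exact this
  have hwe : ∀ t ∈ N, w.eval t = 0 := by
    intro t ht
    rw [hw, Polynomial.eval_prod]
    exact Finset.prod_eq_zero ht (by simp)
  set p := g - Polynomial.C (g.coeff d) * w with hp
  have hpd : p.degree < N.card := by
    rw [hN, Polynomial.degree_lt_iff_coeff_zero]
    intro n hn
    rcases hn.eq_or_lt with rfl | hn
    · have : w.coeff d = 1 := by rw [← hwd]; exact hwm.coeff_natDegree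
      simp [hp, this]
    · simp [hp, Polynomial.coeff_eq_zero_of_natDegree_lt (hg.trans_lt hn),
        Polynomial.coeff_eq_zero_of_natDegree_lt (hwd.le.trans_lt hn)]
  have := Lagrange.coeff_eq_sum (s := N) (v := fun t : K => t) (fun _ _ _ _ h => h) hpd
  rw [hN] at this
  have e : p.coeff (d - 1) = g.coeff (d - 1) := by simp [hp, hwc]
  rw [← e, this]
  refine Finset.sum_congr rfl fun t ht => ?_
  simp [hp, hwe t ht, div_eq_mul_inv, mul_comm]

abbrev PX (K : Type) [Field K] := Polynomial K

def cyl (h : P3 K) : Polynomial K := aeval ![1, Polynomial.X, 0] h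
def czl (h : P3 K) : Polynomial K := aeval ![1, 0, Polynomial.X] h

lemma cyl_eval (h : P3 K) (t : K) : (cyl h).eval t = eval ![1, t, 0] h := by
  have := congrArg (fun f : P3 K →+* K => f h) (MvPolynomial.ringHom_ext
    (f := (Polynomial.evalRingHom t).comp (aeval ![1, Polynomial.X, 0] : P3 K →ₐ[K] Polynomial K).toRingHom)
    (g := eval ![1, t, 0]) (by intro r; simp) (by intro i; fin_cases i <;> simp))
  simpa [cyl] using this
lemma czl_eval (h : P3 K) (t : K) : (czl h).eval t = eval ![1, 0, t] h := by
  have := congrArg (fun f : P3 K →+* K => f h) (MvPolynomial.ringHom_ext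
    (f := (Polynomial.evalRingHom t).comp (aeval ![1, 0, Polynomial.X] : P3 K →ₐ[K] Polynomial K).toRingHom)
    (g := eval ![1, 0, t]) (by intro r; simp) (by intro i; fin_cases i <;> simp))
  simpa [czl] using this

lemma hom_induct {d : ℕ} {p : P3 K → Prop} (h0 : p 0) (ha : ∀ f g, p f → p g → p (f + g))
    (hm : ∀ (i j l : ℕ) (c : K), i + j + l = d → p (C c * (X 0 ^ i * X 1 ^ j * X 2 ^ l)))
    {h : P3 K} (hh : h.IsHomogeneous d) : p h := by
  rw [h.as_sum]
  refine Finset.sum_induction _ p ha h0 fun e he => ?_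
  have h1 := hh.degree_eq_sum_deg_support he
  have h2 : (monomial e) (coeff e h) = C (coeff e h) * (X 0 ^ e 0 * X 1 ^ e 1 * X 2 ^ e 2) := by
    rw [monomial_eq, Finsupp.prod_fintype _ _ (by simp), Fin.prod_univ_three]
  rw [h2]
  apply hm
  rw [← Fin.sum_univ_three (fun i => e i), h1]
  exact (Finset.sum_subset (Finset.subset_univ _) (by simp)).symm

lemma cyl_coeff {d : ℕ} (hd : 1 ≤ d) {h : P3 K} (hh : h.IsHomogeneous d) :
    (cyl h).coeff (d - 1) = eval ey (pderiv 0 h) := by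
  refine hom_induct (p := fun h => (cyl h).coeff (d - 1) = eval ey (pderiv 0 h)) ?_ ?_ ?_ hh
  · simp [cyl]
  · intro f g hf hg; simp [cyl] at hf hg ⊢; rw [hf, hg]
  · intro i j l c hc
    rcases l with - | l
    · rcases i with - | - | i
      · have : j ≠ d - 1 := by omega
        simp [cyl, Polynomial.coeff_X_pow, this.symm, pderiv_X]
      · have : j = d - 1 := by omega
        simp [cyl, Polynomial.coeff_X_pow, this, pderiv_X]
      · have : j ≠ d - 1 := by omega
        simp [cyl, Polynomial.coeff_X_pow, this.symm, pderiv_X]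
    · simp [cyl, pderiv_X]

lemma czl_coeff {d : ℕ} (hd : 1 ≤ d) {h : P3 K} (hh : h.IsHomogeneous d) :
    (czl h).coeff (d - 1) = eval ez (pderiv 0 h) := by
  refine hom_induct (p := fun h => (czl h).coeff (d - 1) = eval ez (pderiv 0 h)) ?_ ?_ ?_ hh
  · simp [czl]
  · intro f g hf hg; simp [czl] at hf hg ⊢; rw [hf, hg]
  · intro i l j c hc
    rcases l with - | l
    · rcases i with - | - | i
      · have : j ≠ d - 1 := by omega
        simp [czl, Polynomial.coeff_X_pow, this.symm, pderiv_X]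
      · have : j = d - 1 := by omega
        simp [czl, Polynomial.coeff_X_pow, this, pderiv_X]
      · have : j ≠ d - 1 := by omega
        simp [czl, Polynomial.coeff_X_pow, this.symm, pderiv_X]
    · simp [czl, pderiv_X]

lemma natDeg_cyl {d : ℕ} {h : P3 K} (hh : h.IsHomogeneous d) : (cyl h).natDegree ≤ d := by
  have := MvPolynomial.aeval_natDegree_le (n := 1) h hh.totalDegree_le ![1, Polynomial.X, 0]
    (by intro i; fin_cases i <;> simp)
  simpa [cyl] using this
lemma natDeg_czl {d : ℕ} {h : P3 K} (hh : h.IsHomogeneous d) : (czl h).natDegree ≤ d := by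
  have := MvPolynomial.aeval_natDegree_le (n := 1) h hh.totalDegree_le ![1, 0, Polynomial.X]
    (by intro i; fin_cases i <;> simp)
  simpa [czl] using this

lemma nodes [CharZero K] (d : ℕ) (hd : 4 ≤ d) : ∃ N : Finset K, N.card = d ∧ ∑ t ∈ N, t = 0 ∧
    ∀ j, j + 1 < d → (j : K) ∈ N := by
  classical
  set M : Finset K := (Finset.range (d - 1)).image (fun j : ℕ => (j : K)) with hM
  have hinj : Function.Injective (fun j : ℕ => (j : K)) := Nat.cast_injective
  have hs : ∑ t ∈ M, t = ((∑ j ∈ Finset.range (d - 1), j : ℕ) : K) := by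
    rw [hM, Finset.sum_image (fun _ _ _ _ h => hinj h)]; push_cast; rfl
  have hpos : 0 < ∑ j ∈ Finset.range (d - 1), j := by
    refine Finset.sum_pos' (by simp) ⟨1, by simp; omega, by simp⟩
  set S := ∑ j ∈ Finset.range (d - 1), j
  have hn : (-(S : K)) ∉ M := by
    simp only [hM, Finset.mem_image, not_exists, not_and]
    intro j _ h
    have : ((j + S : ℕ) : K) = 0 := by push_cast; rw [h]; ring
    have := Nat.cast_eq_zero.1 this
    omega
  refine ⟨insert (-(S : K)) M, ?_, ?_, ?_⟩
  · rw [Finset.card_insert_of_notMem hn, hM, Finset.card_image_of_injective _ hinj]; simp; omega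
  · rw [Finset.sum_insert hn, hs]; ring
  · intro j hj
    refine Finset.mem_insert_of_mem (Finset.mem_image_of_mem _ (Finset.mem_range.2 (by omega)))

theorem Rep.UB [CharZero K] {d u k : ℕ} (hu : 1 ≤ u) (hd : 2 * u + 2 * k + 10 ≤ d) :
    ∃ a : ℕ → K, (∀ j < u, a j ≠ 0) ∧ Rep d (2 * d - 1 - u + k) (Pf a u k) := by
  classical
  obtain ⟨N, hN, hs, hj⟩ := nodes (K := K) d (by omega)
  set W : K → K := fun t => (∏ j ∈ N.erase t, (t - j))⁻¹ with hW
  have hW0 : ∀ t, W t ≠ 0 := by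
    intro t
    refine inv_ne_zero (Finset.prod_ne_zero_iff.2 fun j hj => ?_)
    rw [sub_ne_zero]; exact (Finset.ne_of_mem_erase hj).symm
  set a : ℕ → K := fun j => if j = 0 then - (2 * W 0) else - W j with ha
  refine ⟨a, ?_, ?_⟩
  · intro j _
    simp only [ha]; split_ifs
    · simp [hW0]
    · simp [hW0]
  set U : Finset K := (Finset.range u).image (fun j : ℕ => (j : K)) with hU
  have hinj : Function.Injective (fun j : ℕ => (j : K)) := Nat.cast_injective
  have hUN : U ⊆ N := by
    intro t ht
    obtain ⟨j, hj', rfl⟩ := Finset.mem_image.1 ht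
    have := Finset.mem_range.1 hj'
    exact hj j (by omega)
  have hUc : U.card = u := by rw [hU, Finset.card_image_of_injective _ hinj]; simp
  have h0 : (0 : K) ∈ N := by have := hj 0 (by omega); simpa using this
  have r1 := Rep.finset d (N.erase 0) W (fun t => ![1, t, 0])
  have r2 := Rep.finset d (N \ U) W (fun t => ![1, 0, t])
  have r3 := Rep.finset d (Finset.range k) (fun _ => (1 : K)) ppt
  refine ((r1.add r2).add r3).congr ?_ ?_
  · intro h hh
    have e1 := divdiff N hN (by omega) hs (cyl h) (natDeg_cyl hh)
    have e2 := divdiff N hN (by omega) hs (czl h) (natDeg_czl hh)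
    rw [cyl_coeff (by omega) hh] at e1
    rw [czl_coeff (by omega) hh] at e2
    simp only [cyl_eval] at e1
    simp only [czl_eval] at e2
    rw [← Finset.add_sum_erase _ _ h0] at e1
    rw [← Finset.sum_sdiff hUN, hU, Finset.sum_image (fun _ _ _ _ h => hinj h), ← hU] at e2
    have e3 : ∑ j ∈ Finset.range u, a j * eval (Opt j) h =
        - (∑ j ∈ Finset.range u, W j * eval ![1, 0, (j : K)] h) - W 0 * eval ![1, 0, 0] h := by
      obtain ⟨u', rfl⟩ : ∃ u', u = u' + 1 := ⟨u - 1, by omega⟩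
      rw [Finset.sum_range_succ', Finset.sum_range_succ']
      have : ∀ j : ℕ, a (j + 1) * eval (Opt (j + 1)) h =
          - (W ((j + 1 : ℕ) : K) * eval ![1, 0, ((j + 1 : ℕ) : K)] h) := by
        intro j; simp [ha, Opt]
      simp only [this, Finset.sum_neg_distrib]
      simp [ha, Opt]; ring
    simp only [Pf]
    rw [e1, e2, e3]
    simp only [one_mul, hW]
    ring
  · rw [Finset.card_erase_of_mem h0, Finset.card_sdiff_of_subset hUN, hN, hUc]
    simp; omega

end S18
end Upper

open MvPolynomial
set_option linter.unusedSectionVars false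

noncomputable section Border
namespace S18
variable {K : Type} [Field K]

def cy : P3 K →ₐ[K] Polynomial K := aeval ![Polynomial.X, 1, 0]
def cz : P3 K →ₐ[K] Polynomial K := aeval ![Polynomial.X, 0, 1]

lemma cy_eval (h : P3 K) (t : K) : (cy h).eval t = eval ![t, 1, 0] h := by
  have := congrArg (fun f : P3 K →+* K => f h) (MvPolynomial.ringHom_ext
    (f := (Polynomial.evalRingHom t).comp (cy : P3 K →ₐ[K] Polynomial K).toRingHom)
    (g := eval ![t, 1, 0]) (by intro r; simp [cy]) (by intro i; fin_cases i <;> simp [cy]))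
  simpa using this
lemma cz_eval (h : P3 K) (t : K) : (cz h).eval t = eval ![t, 0, 1] h := by
  have := congrArg (fun f : P3 K →+* K => f h) (MvPolynomial.ringHom_ext
    (f := (Polynomial.evalRingHom t).comp (cz : P3 K →ₐ[K] Polynomial K).toRingHom)
    (g := eval ![t, 0, 1]) (by intro r; simp [cz]) (by intro i; fin_cases i <;> simp [cz]))
  simpa using this

lemma cy_coeff (h : P3 K) : (cy h).coeff 1 = eval ey (pderiv 0 h) := by
  induction h using MvPolynomial.induction_on with
  | C a => simp [cy]
  | add p q hp hq => simp [hp, hq]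
  | mul_X p i hp =>
    have h0 : (cy p).coeff 0 = eval ey p := by
      rw [Polynomial.coeff_zero_eq_eval_zero, cy_eval]; rfl
    rw [map_mul]
    fin_cases i
    · simp [cy] at h0 hp ⊢
      exact h0
    · simp [cy, pderiv_X] at h0 hp ⊢; exact hp
    · simp [cy, pderiv_X]
lemma cz_coeff (h : P3 K) : (cz h).coeff 1 = eval ez (pderiv 0 h) := by
  induction h using MvPolynomial.induction_on with
  | C a => simp [cz]
  | add p q hp hq => simp [hp, hq]
  | mul_X p i hp =>
    have h0 : (cz p).coeff 0 = eval ez p := by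
      rw [Polynomial.coeff_zero_eq_eval_zero, cz_eval]; rfl
    rw [map_mul]
    fin_cases i
    · simp [cz] at h0 hp ⊢
      exact h0
    · simp [cz, pderiv_X]
    · simp [cz, pderiv_X] at h0 hp ⊢; exact hp

lemma natDeg_cy {d : ℕ} {h : P3 K} (hh : h.IsHomogeneous d) : (cy h).natDegree ≤ d := by
  have := MvPolynomial.aeval_natDegree_le (n := 1) h hh.totalDegree_le ![Polynomial.X, 1, 0]
    (by intro i; fin_cases i <;> simp)
  simpa [cy] using this
lemma natDeg_cz {d : ℕ} {h : P3 K} (hh : h.IsHomogeneous d) : (cz h).natDegree ≤ d := by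
  have := MvPolynomial.aeval_natDegree_le (n := 1) h hh.totalDegree_le ![Polynomial.X, 0, 1]
    (by intro i; fin_cases i <;> simp)
  simpa [cz] using this

lemma diffquot (p : Polynomial K) {d : ℕ} (hp : p.natDegree ≤ d) {ε : K} (hε : ε ≠ 0) :
    ∑ n ∈ Finset.range (d + 1), ε ^ n * p.coeff (n + 1) = ε⁻¹ * p.eval ε - ε⁻¹ * p.eval 0 := by
  rw [Polynomial.eval_eq_sum_range' (n := d + 1 + 1) (by omega) ε, Finset.sum_range_succ' _ (d + 1),
    ← Polynomial.coeff_zero_eq_eval_zero, mul_add, Finset.mul_sum]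
  simp only [pow_zero, mul_one, add_sub_cancel_right]
  refine Finset.sum_congr rfl fun n _ => ?_
  field_simp
  ring

def restL (a : ℕ → K) (u k : ℕ) : P3 K →ₗ[K] K :=
  ∑ j ∈ Finset.range u, a j • (aeval (Opt j : Fin 3 → K) : P3 K →ₐ[K] K).toLinearMap
    + ∑ i ∈ Finset.range k, (aeval (ppt i : Fin 3 → K) : P3 K →ₐ[K] K).toLinearMap

lemma restL_apply (a : ℕ → K) (u k : ℕ) (h : P3 K) : restL a u k h =
    ∑ j ∈ Finset.range u, a j * eval (Opt j) h + ∑ i ∈ Finset.range k, eval (ppt i) h := by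
  simp [restL, aeval_eq_eval]

def psi (a : ℕ → K) (u k : ℕ) (n : ℕ) : P3 K →ₗ[K] K :=
  Polynomial.lcoeff K (n + 1) ∘ₗ cy.toLinearMap + Polynomial.lcoeff K (n + 1) ∘ₗ cz.toLinearMap
    + if n = 0 then restL a u k else 0

lemma psi_zero (a : ℕ → K) (u k : ℕ) (h : P3 K) : psi a u k 0 h = Pf a u k h := by
  simp [psi, restL_apply, Pf, cy_coeff, cz_coeff, add_assoc]

lemma Rep.border (a : ℕ → K) (u k d : ℕ) {ε : K} (hε : ε ≠ 0) :
    Rep d (4 + u + k) (fun h => ∑ n ∈ Finset.range (d + 1), ε ^ n * psi a u k n h) := by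
  have r1 := Rep.finset d (Finset.univ : Finset (Fin 4)) ![ε⁻¹, -ε⁻¹, ε⁻¹, -ε⁻¹]
    ![![ε, 1, 0], ey, ![ε, 0, 1], ez]
  have r2 := Rep.finset d (Finset.range u) a Opt
  have r3 := Rep.finset d (Finset.range k) (fun _ => (1 : K)) ppt
  refine ((r1.add r2).add r3).congr ?_ (by simp)
  intro h hh
  have e1 := diffquot _ (natDeg_cy hh) hε
  have e2 := diffquot _ (natDeg_cz hh) hε
  have e3 : ∑ n ∈ Finset.range (d + 1), ε ^ n * (if n = 0 then restL a u k else 0 : P3 K →ₗ[K] K) h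
      = restL a u k h := by
    rw [Finset.sum_eq_single 0]
    · simp
    · intro n _ hn; simp [hn]
    · simp
  have e4 : ∑ n ∈ Finset.range (d + 1), ε ^ n * psi a u k n h =
      ∑ n ∈ Finset.range (d + 1), ε ^ n * (cy h).coeff (n + 1) +
      ∑ n ∈ Finset.range (d + 1), ε ^ n * (cz h).coeff (n + 1) + restL a u k h := by
    rw [← e3, ← Finset.sum_add_distrib, ← Finset.sum_add_distrib]
    refine Finset.sum_congr rfl fun n _ => ?_
    simp [psi]; ring
  rw [e4, e1, e2, cy_eval, cy_eval, cz_eval, cz_eval, restL_apply, Fin.sum_univ_four]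
  simp [ey, ez]; ring

/-! ### matrix lower bound -/

abbrev Ix (u k : ℕ) := Fin 4 ⊕ (Fin u ⊕ Fin k)

def evL (p : Fin 3 → K) : P3 K →ₗ[K] K := (aeval p : P3 K →ₐ[K] K).toLinearMap
def dvL (p : Fin 3 → K) : P3 K →ₗ[K] K := evL p ∘ₗ (pderiv 0 : Derivation K (P3 K) (P3 K)).toLinearMap
lemma evL_apply (p : Fin 3 → K) (h : P3 K) : evL p h = eval p h := by simp [evL, aeval_eq_eval]
lemma dvL_apply (p : Fin 3 → K) (h : P3 K) : dvL p h = eval p (pderiv 0 h) := by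
  simp [dvL, evL_apply]

def LL (u k : ℕ) : Ix u k → (P3 K →ₗ[K] K) :=
  Sum.elim ![evL ey, dvL ey, evL ez, dvL ez]
    (Sum.elim (fun j => evL (Opt j)) (fun i => evL (ppt i)))
def LL' (u k : ℕ) : Ix u k → (P3 K →ₗ[K] K) :=
  Sum.elim ![dvL ey, evL ey, dvL ez, evL ez]
    (Sum.elim (fun j => evL (Opt j)) (fun i => evL (ppt i)))

lemma LL_indep [CharZero K] {u k t : ℕ} (ht : u + k + 2 ≤ t) (c : Ix u k → K)
    (h : ∀ g : P3 K, g.IsHomogeneous t → ∑ i, c i * LL u k i g = 0) : c = 0 := by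
  simp only [Fintype.sum_sum_type, Fin.sum_univ_four, LL, Sum.elim_inl, Sum.elim_inr,
    evL_apply] at h
  simp [evL_apply, dvL_apply] at h
  have h1 := T1' (t := t - 1) (Sum.elim ![ey, ez] (fun j : Fin u => (Opt j : Fin 3 → K))) (by
      rw [Function.Injective]
      rintro (i | i) (j | j) e
      · fin_cases i <;> fin_cases j <;> simp [ey_ne_ez, ey_ne_ez.symm] at e ⊢
      · have := congrFun e 0; fin_cases i <;> simp at this
      · have := congrFun e 0; fin_cases j <;> simp at this
      · congr 1; ext; exact Opt_inj e) (by
      rintro (i | i)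
      · fin_cases i
        · exact nrm_ey
        · exact nrm_ez
      · exact nrm_Opt _) (by simp; omega)
    (Sum.elim ![c (.inl 1), c (.inl 3)] (fun j => c (.inr (.inl j)))) (by
      intro g hg
      have := h (X 0 * g) (by
        have := (isHomogeneous_X K (0 : Fin 3)).mul hg
        rwa [show 1 + (t - 1) = t by omega] at this)
      simp at this
      simp [Fintype.sum_sum_type]
      linear_combination this)
  have c1 := congrFun h1 (.inl 0)
  have c3 := congrFun h1 (.inl 1)
  have cO := fun j => congrFun h1 (.inr j)
  simp at c1 c3 cO
  have h2 := T1' (t := t) (Sum.elim ![ey, ez] (fun j : Fin k => (ppt j : Fin 3 → K))) (by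
      rw [Function.Injective]
      rintro (i | i) (j | j) e
      · fin_cases i <;> fin_cases j <;> simp [ey_ne_ez, ey_ne_ez.symm] at e ⊢
      · have h1 := congrFun e 1
        have h2 := congrFun e 2
        fin_cases i <;> simp at h1 h2; norm_cast at h2
      · have h1 := congrFun e 1
        have h2 := congrFun e 2
        fin_cases j <;> simp at h1 h2; norm_cast at h2
      · congr 1; ext; exact ppt_inj e) (by
      rintro (i | i)
      · fin_cases i
        · exact nrm_ey
        · exact nrm_ez
      · exact nrm_ppt _) (by simp; omega)
    (Sum.elim ![c (.inl 0), c (.inl 2)] (fun j => c (.inr (.inr j)))) (by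
      intro g hg
      have := h g hg
      simp [c1, c3, cO] at this
      simp [Fintype.sum_sum_type]
      linear_combination this)
  have c0 := congrFun h2 (.inl 0)
  have c2 := congrFun h2 (.inl 1)
  have cp := fun j => congrFun h2 (.inr j)
  simp at c0 c2 cp
  funext i
  rcases i with i | i | i
  · fin_cases i <;> simpa
  · simpa using cO i
  · simpa using cp i

lemma dual_of_indep {ι : Type} [Fintype ι] [DecidableEq ι] (L : ι → (P3 K →ₗ[K] K)) (t : ℕ)
    (hL : ∀ c : ι → K, (∀ g : P3 K, g.IsHomogeneous t → ∑ i, c i * L i g = 0) → c = 0) :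
    ∃ f : ι → P3 K, (∀ i, (f i).IsHomogeneous t) ∧ ∀ i j, L j (f i) = if i = j then 1 else 0 := by
  set Λ : homogeneousSubmodule (Fin 3) K t →ₗ[K] (ι → K) :=
    LinearMap.pi (fun i => L i ∘ₗ Submodule.subtype _) with hΛ
  have hs : LinearMap.range Λ = ⊤ := by
    by_contra hne
    obtain ⟨F, hF, hF'⟩ := Submodule.exists_le_ker_of_lt_top _ (lt_top_iff_ne_top.2 hne)
    apply hF
    have hFs : ∀ x : ι → K, F x = ∑ i, F (Pi.single i 1) * x i := by
      intro x
      conv_lhs => rw [← Finset.univ_sum_single x]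
      rw [map_sum]
      refine Finset.sum_congr rfl fun i _ => ?_
      have : (Pi.single i (x i) : ι → K) = x i • Pi.single i 1 := by
        rw [← Pi.single_smul]; simp
      rw [this, map_smul, smul_eq_mul, mul_comm]
    have := hL (fun i => F (Pi.single i 1)) (by
      intro g hg
      have : F (Λ ⟨g, hg⟩) = 0 := hF' ⟨_, rfl⟩
      rw [hFs] at this
      simpa [hΛ] using this)
    ext i
    simpa using congrFun this i
  have : ∀ i, ∃ f, Λ f = Pi.single i 1 := fun i => LinearMap.range_eq_top.1 hs _
  choose f hf using this
  refine ⟨fun i => f i, fun i => (f i).2, fun i j => ?_⟩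
  have := congrFun (hf i) j
  simp [hΛ] at this
  rw [this, Pi.single_apply]
  simp [eq_comm]

lemma LL'_indep [CharZero K] {u k t : ℕ} (ht : u + k + 2 ≤ t) (c : Ix u k → K)
    (h : ∀ g : P3 K, g.IsHomogeneous t → ∑ i, c i * LL' u k i g = 0) : c = 0 := by
  have := LL_indep ht (Sum.elim ![c (.inl 1), c (.inl 0), c (.inl 3), c (.inl 2)]
    (fun i => c (.inr i))) (by
      intro g hg
      rw [← h g hg]
      simp only [Fintype.sum_sum_type, Fin.sum_univ_four, LL, LL', Sum.elim_inl, Sum.elim_inr]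
      simp
      ring)
  have c0 := congrFun this (.inl 0)
  have c1 := congrFun this (.inl 1)
  have c2 := congrFun this (.inl 2)
  have c3 := congrFun this (.inl 3)
  have cc := fun i => congrFun this (.inr i)
  simp at c0 c1 c2 c3 cc
  funext i
  rcases i with i | i | i
  · fin_cases i <;> simpa
  · simpa using cc.1 i
  · simpa using cc.2 i

theorem matrixLB [CharZero K] {u k d : ℕ} {a : ℕ → K} (ha : ∀ j < u, a j ≠ 0)
    (hd : 2 * u + 2 * k + 10 ≤ d) :
    ∃ f g : Ix u k → P3 K, (∀ i j, (f i * g j).IsHomogeneous d) ∧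
      (Matrix.of fun i j => Pf a u k (f i * g j)).det ≠ 0 := by
  obtain ⟨f, hf, hf'⟩ := dual_of_indep (LL (K := K) u k) (u + k + 2) (LL_indep le_rfl)
  obtain ⟨g, hg, hg'⟩ := dual_of_indep (LL' (K := K) u k) (d - (u + k + 2)) (LL'_indep (by omega))
  refine ⟨f, g, fun i j => ?_, ?_⟩
  · have := (hf i).mul (hg j)
    rwa [show u + k + 2 + (d - (u + k + 2)) = d by omega] at this
  set w : Ix u k → K := Sum.elim (fun _ => 1) (Sum.elim (fun j => a j) (fun _ => 1)) with hw
  have key : ∀ p q : P3 K, Pf a u k (p * q) = ∑ l, w l * (LL u k l p * LL' u k l q) := by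
    intro p q
    simp only [Fintype.sum_sum_type, Fin.sum_univ_four, LL, LL', Sum.elim_inl, Sum.elim_inr, hw]
    simp [Pf, evL_apply, dvL_apply, Finset.sum_range]
    ring
  have hM : (Matrix.of fun i j => Pf a u k (f i * g j)) = Matrix.diagonal w := by
    ext i j
    simp only [Matrix.of_apply, key, hf', hg', Matrix.diagonal_apply]
    by_cases h : i = j
    · subst h; simp
    · simp [h]
  rw [hM, Matrix.det_diagonal, Finset.prod_ne_zero_iff]
  intro l _
  rcases l with l | l | l
  · simp [hw]
  · simpa [hw] using ha l l.2
  · simp [hw]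

lemma det_zero {ι : Type} [Fintype ι] [DecidableEq ι] {n : ℕ} (hn : n < Fintype.card ι)
    (F : Matrix ι (Fin n) K) (G : Matrix (Fin n) ι K) : (F * G).det = 0 := by
  by_contra h
  have h1 := Matrix.rank_of_isUnit (F * G) ((Matrix.isUnit_iff_isUnit_det _).2 (isUnit_iff_ne_zero.2 h))
  have h2 := Matrix.rank_mul_le_left F G
  have h3 := Matrix.rank_le_card_width F
  rw [Fintype.card_fin] at h3
  omega

end S18
end Border

open MvPolynomial
open scoped LinearAlgebra.Projectivization
set_option linter.unusedSectionVars false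

noncomputable section Final
namespace S18
variable {K : Type} [Field K] {m d : ℕ}

lemma nu_apply (v : Fin (m+1) → K) (h : Hd K m d) : nu d v h = eval v (h : PR K m) := by
  simp [nu, aeval_eq_eval]

lemma nu_smul (c : K) (v : Fin (m+1) → K) : nu d (c • v) = c ^ d • nu d v := by
  ext h
  rw [nu_apply, eval_smul_hom h.2, LinearMap.smul_apply, nu_apply, smul_eq_mul]

/-- Representation of a functional by `n` evaluations. -/
def RepN (n : ℕ) (φ : Module.Dual K (Hd K m d)) : Prop :=
  ∃ (c : Fin n → K) (v : Fin n → Fin (m+1) → K), φ = ∑ i, c i • nu d (v i)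

lemma RepN.of_span {S : Finset (PN K m d)} (hS : (S : Set (PN K m d)) ⊆ XSet K m d)
    {φ : Module.Dual K (Hd K m d)}
    (h : φ ∈ Submodule.span K (Projectivization.rep '' (S : Set (PN K m d)))) :
    RepN S.card φ := by
  classical
  have hx : ∀ Q : PN K m d, ∃ (c : K) (v : Fin (m+1) → K), Q ∈ S → Q.rep = c • nu d v := by
    intro Q
    by_cases hQ : Q ∈ S
    · obtain ⟨a, ha⟩ := hS hQ
      have : Q.rep ∈ Q.submodule := by rw [Projectivization.submodule_eq]; exact Submodule.mem_span_singleton_self _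
      rw [ha] at this
      obtain ⟨c, hc⟩ := Submodule.mem_span_singleton.1 this
      exact ⟨c, a.rep, fun _ => hc.symm⟩
    · exact ⟨0, 0, fun h => absurd h hQ⟩
  choose c v hcv using hx
  rw [Submodule.mem_span_image_finset_iff_exists_fun] at h
  obtain ⟨b, hb⟩ := h
  refine ⟨fun i => b (S.equivFin.symm i) * c (S.equivFin.symm i).1,
    fun i => v (S.equivFin.symm i).1, ?_⟩
  rw [← hb, ← Equiv.sum_comp S.equivFin.symm]
  refine Finset.sum_congr rfl fun i _ => ?_
  rw [hcv _ (S.equivFin.symm i).2, mul_smul]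

lemma mk_line {V : Type} [AddCommGroup V] [Module K V] (x : V) (hx : x ≠ 0) :
    ∃ Q : ℙ K V, Q.submodule = Submodule.span K {x} ∧ ∃ c : Kˣ, c • x = Q.rep :=
  ⟨Projectivization.mk K x hx, Projectivization.submodule_mk _ _,
    Projectivization.exists_smul_eq_mk_rep K x hx⟩

lemma pt_ex (hd : 0 < d) (v : Fin (m+1) → K) (h : nu d v ≠ 0) :
    ∃ Q ∈ XSet K m d, ∃ b : K, nu d v = b • Q.rep := by
  have hv : v ≠ 0 := by
    intro h0
    apply h
    have := nu_smul (d := d) (0 : K) v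
    rw [zero_pow hd.ne', zero_smul, zero_smul] at this
    rw [h0, this]
  obtain ⟨a, ha, c, hc⟩ := mk_line (K := K) v hv
  obtain ⟨Q, hQ, c', hc'⟩ := mk_line (K := K) _ h
  refine ⟨Q, ⟨a, ?_⟩, (c'⁻¹ : Kˣ), ?_⟩
  · rw [hQ, ← hc, Units.smul_def, nu_smul]
    exact (Submodule.span_singleton_smul_eq (IsUnit.mk0 _ (pow_ne_zero _ c.ne_zero)) _).symm
  · rw [← hc', Units.smul_def, smul_smul]
    simp

lemma RepN.to_span (hd : 0 < d) {n : ℕ} {φ : Module.Dual K (Hd K m d)} (h : RepN n φ) :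
    ∃ S : Finset (PN K m d), (S : Set (PN K m d)) ⊆ XSet K m d ∧ S.card ≤ n ∧
      φ ∈ Submodule.span K (Projectivization.rep '' (S : Set (PN K m d))) := by
  classical
  obtain ⟨c, v, rfl⟩ := h
  set J : Finset (Fin n) := Finset.univ.filter (fun i => nu d (v i) ≠ 0) with hJ
  have hJ' : ∀ i : J, nu d (v i) ≠ 0 := fun i => (Finset.mem_filter.1 i.2).2
  choose Q hQ b hb using fun i : J => pt_ex hd (v i) (hJ' i)
  refine ⟨Finset.univ.image Q, ?_, ?_, ?_⟩
  · intro q hq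
    obtain ⟨i, _, rfl⟩ := Finset.mem_image.1 hq
    exact hQ i
  · refine Finset.card_image_le.trans ?_
    rw [Finset.card_univ, Fintype.card_coe]
    exact (Finset.card_filter_le _ _).trans (by simp)
  · refine Submodule.sum_mem _ fun i _ => Submodule.smul_mem _ _ ?_
    by_cases hi : nu d (v i) = 0
    · rw [hi]; exact Submodule.zero_mem _
    · have hiJ : i ∈ J := Finset.mem_filter.2 ⟨Finset.mem_univ _, hi⟩
      have := hb ⟨i, hiJ⟩
      change nu d (v i) = _ at this
      rw [this]
      exact Submodule.smul_mem _ _ (Submodule.subset_span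
        ⟨_, Finset.mem_image_of_mem _ (Finset.mem_univ _), rfl⟩)

lemma RepN.smul {n : ℕ} {φ : Module.Dual K (Hd K m d)} (h : RepN n φ) (c : K) :
    RepN n (c • φ) := by
  obtain ⟨b, v, rfl⟩ := h
  exact ⟨fun i => c * b i, v, by simp [Finset.smul_sum, mul_smul]⟩

/-- embedding of coordinates -/
def i3 (hm : 2 ≤ m) : Fin 3 → Fin (m+1) := Fin.castLE (by omega)

def res (hm : 2 ≤ m) : PR K m →ₐ[K] P3 K :=
  aeval (fun i => if h : i.1 < 3 then X ⟨i.1, h⟩ else 0)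

lemma res_rename (hm : 2 ≤ m) (h : P3 K) : res hm (rename (i3 hm) h) = h := by
  rw [res, aeval_rename]
  have : (fun i : Fin (m+1) => if h : i.1 < 3 then (X ⟨i.1, h⟩ : P3 K) else 0) ∘ i3 hm = X := by
    funext i; simp [i3]
  rw [this, aeval_X_left_apply]

lemma res_hom (hm : 2 ≤ m) {h : PR K m} (hh : h.IsHomogeneous d) : (res hm h).IsHomogeneous d := by
  have := hh.aeval (fun i : Fin (m+1) => if h : i.1 < 3 then (X ⟨i.1, h⟩ : P3 K) else 0) (n := 1)
    (by
      intro i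
      split_ifs
      · exact isHomogeneous_X _ _
      · exact isHomogeneous_zero _ _ _)
  rw [one_mul] at this
  exact this

def emb (v : Fin 3 → K) : Fin (m+1) → K := fun i => if h : i.1 < 3 then v ⟨i.1, h⟩ else 0

lemma eval_res (hm : 2 ≤ m) (v : Fin 3 → K) (h : PR K m) : eval v (res hm h) = eval (emb v) h := by
  have := congrArg (fun f : PR K m →+* K => f h) (MvPolynomial.ringHom_ext
    (f := (eval v).comp (res hm : PR K m →ₐ[K] P3 K).toRingHom)
    (g := eval (emb v)) (by intro r; simp [res]) (by
      intro i
      simp only [res, RingHom.comp_apply]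
      simp
      split_ifs with hi <;> simp [emb, hi]))
  simpa using this

/-- functional on forms in `m+1` variables coming from one in three variables -/
def lft (hm : 2 ≤ m) (L : P3 K →ₗ[K] K) : Module.Dual K (Hd K m d) :=
  L ∘ₗ (res hm).toLinearMap ∘ₗ (Hd K m d).subtype

lemma lft_apply (hm : 2 ≤ m) (L : P3 K →ₗ[K] K) (h : Hd K m d) : lft hm L h = L (res hm h) := rfl

def ren (hm : 2 ≤ m) (h : P3 K) (hh : h.IsHomogeneous d) : Hd K m d :=
  ⟨rename (i3 hm) h, hh.rename_isHomogeneous⟩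

lemma lft_ren (hm : 2 ≤ m) (L : P3 K →ₗ[K] K) (h : P3 K) (hh : h.IsHomogeneous d) :
    lft hm L (ren hm h hh) = L h := by
  rw [lft_apply, ren, res_rename]

lemma nu_ren (hm : 2 ≤ m) (v : Fin (m+1) → K) (h : P3 K) (hh : h.IsHomogeneous d) :
    nu d v (ren hm h hh) = eval (v ∘ i3 hm) h := by
  rw [nu_apply, ren, eval_rename]

lemma Rep.lift (hm : 2 ≤ m) {n : ℕ} {L : P3 K →ₗ[K] K} (h : Rep d n L) :
    RepN n (lft (d := d) hm L) := by
  obtain ⟨c, v, h⟩ := h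
  refine ⟨c, fun i => emb (v i), ?_⟩
  ext g
  rw [lft_apply, h _ (res_hom hm g.2)]
  simp [nu_apply, eval_res]

lemma RepN.desc (hm : 2 ≤ m) {n : ℕ} {L : P3 K →ₗ[K] K} (h : RepN n (lft (d := d) hm L)) :
    Rep d n L := by
  obtain ⟨c, v, h⟩ := h
  refine ⟨c, fun i => v i ∘ i3 hm, fun g hg => ?_⟩
  rw [← lft_ren hm L g hg, h]
  simp [nu_ren]

end S18
end Final

open MvPolynomial
open scoped LinearAlgebra.Projectivization
set_option linter.unusedSectionVars false

noncomputable section Assembly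
namespace S18
variable {K : Type} [Field K] {m d : ℕ}

lemma srank_eq (hd : 0 < d) {P : PN K m d} {φ : Module.Dual K (Hd K m d)} {c : Kˣ}
    (hP : c • φ = P.rep) {r : ℕ} (hU : RepN r φ) (hL : ∀ n, RepN n φ → r ≤ n) :
    srank d P = r := by
  have hL' : ∀ S : Finset (PN K m d), (S : Set (PN K m d)) ⊆ XSet K m d →
      P.rep ∈ Submodule.span K (Projectivization.rep '' (S : Set (PN K m d))) → r ≤ S.card := by
    intro S hS h
    have h1 := (RepN.of_span hS h).smul ((c⁻¹ : Kˣ) : K)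
    rw [← hP, Units.smul_def, smul_smul, Units.inv_mul, one_smul] at h1
    exact hL _ h1
  unfold srank rankWrt
  apply le_antisymm
  · obtain ⟨S, hS, hc, hs⟩ := (hU.smul (c : K)).to_span hd
    rw [← Units.smul_def, hP] at hs
    exact Nat.sInf_le ⟨S, hS, le_antisymm hc (hL' S hS hs), hs⟩
  · refine le_csInf ?_ ?_
    · obtain ⟨S, hS, hc, hs⟩ := (hU.smul (c : K)).to_span hd
      rw [← Units.smul_def, hP] at hs
      exact ⟨_, S, hS, rfl, hs⟩
    · rintro n ⟨S, hS, rfl, hs⟩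
      exact hL' S hS hs

lemma curve_poly {V : Type} [AddCommGroup V] [Module K V] {F : V → K}
    (hF : F ∈ polyFunctions K V) (N : ℕ) (ψ : ℕ → V) :
    ∃ p : Polynomial K, ∀ ε, p.eval ε = F (∑ n ∈ Finset.range N, ε ^ n • ψ n) := by
  unfold polyFunctions at hF
  induction hF using Algebra.adjoin_induction with
  | mem x hx =>
    obtain ⟨l, rfl⟩ := hx
    refine ⟨∑ n ∈ Finset.range N, Polynomial.X ^ n * Polynomial.C (l (ψ n)), fun ε => ?_⟩
    simp [Polynomial.eval_finsetSum]
    exact Finset.sum_congr rfl fun n _ => mul_comm _ _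
  | algebraMap r => exact ⟨Polynomial.C r, fun ε => by simp [Pi.algebraMap_apply]⟩
  | add x y _ _ hx hy =>
    obtain ⟨p, hp⟩ := hx
    obtain ⟨q, hq⟩ := hy
    exact ⟨p + q, fun ε => by simp [hp, hq]⟩
  | mul x y _ _ hx hy =>
    obtain ⟨p, hp⟩ := hx
    obtain ⟨q, hq⟩ := hy
    exact ⟨p * q, fun ε => by simp [hp, hq]⟩

lemma ex_nonzero [CharZero K] {s : ℕ} (hs : 0 < s) :
    ∃ φ : Module.Dual K (Hd K m d), φ ≠ 0 ∧ RepN s φ := by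
  refine ⟨∑ _i : Fin s, (1 : K) • nu d (fun _ => 1), ?_, ⟨fun _ => 1, fun _ _ => 1, rfl⟩⟩
  intro h
  have h1 : (X 0 ^ d : PR K m) ∈ Hd K m d := isHomogeneous_X_pow _ _
  have := congrArg (fun φ : Module.Dual K (Hd K m d) => φ ⟨_, h1⟩) h
  simp [nu_apply] at this
  omega

lemma mem_secant [CharZero K] (hd : 0 < d) {P : PN K m d} {s : ℕ} (hs : 0 < s) {c : Kˣ} {N : ℕ}
    (ψ : ℕ → Module.Dual K (Hd K m d)) (hP : c • ψ 0 = P.rep)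
    (hψ : ∀ ε : K, ε ≠ 0 → RepN s (∑ n ∈ Finset.range (N + 1), ε ^ n • ψ n)) :
    P ∈ secantWrt (XSet K m d) s := by
  intro F hF hv b
  have key : ∀ x : Module.Dual K (Hd K m d), RepN s x → x ≠ 0 → ∀ e : K, F (e • x) = 0 := by
    intro x hx hx0 e
    obtain ⟨Q, -, c', hc'⟩ := mk_line (K := K) x hx0
    have := hv Q (by
      obtain ⟨S, h1, h2, h3⟩ := (hx.smul (c' : K)).to_span hd
      rw [← Units.smul_def, hc'] at h3
      exact ⟨S, h1, h2, h3⟩) (e * ((c'⁻¹ : Kˣ) : K))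
    rwa [← hc', Units.smul_def, smul_smul, mul_assoc, Units.inv_mul, mul_one] at this
  have key' : ∀ x : Module.Dual K (Hd K m d), RepN s x → ∀ e : K, F (e • x) = 0 := by
    intro x hx e
    by_cases h0 : x = 0
    · obtain ⟨y, hy, hy'⟩ := ex_nonzero (K := K) (m := m) (d := d) hs
      have := key y hy' hy 0
      rw [zero_smul] at this
      rw [h0, smul_zero, this]
    · exact key x hx h0 e
  obtain ⟨p, hp⟩ := curve_poly hF (N + 1) (fun n => (b * (c : K)) • ψ n)
  have hp' : ∀ ε, p.eval ε = F ((b * (c : K)) • ∑ n ∈ Finset.range (N + 1), ε ^ n • ψ n) := by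
    intro ε
    rw [hp, Finset.smul_sum]
    congr 1
    exact Finset.sum_congr rfl fun n _ => smul_comm _ _ _
  have hp0 : p = 0 := by
    apply Polynomial.eq_zero_of_infinite_isRoot
    refine (Set.finite_singleton (0 : K)).infinite_compl.mono ?_
    intro ε hε
    change p.eval ε = 0
    rw [hp']
    exact key' _ (hψ ε hε) _
  have h0 := hp' 0
  rw [hp0, Polynomial.eval_zero, Finset.sum_eq_single 0 (by intro n _ hn; simp [hn]) (by simp),
    pow_zero, one_smul, mul_smul, ← Units.smul_def, hP] at h0
  exact h0.symm

lemma det_poly {V : Type} [AddCommGroup V] [Module K V] {ι : Type} [Fintype ι] [DecidableEq ι]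
    (E : ι → ι → V) :
    (fun x : Module.Dual K V => (Matrix.of fun i j => x (E i j)).det) ∈
      polyFunctions K (Module.Dual K V) := by
  have : (fun x : Module.Dual K V => (Matrix.of fun i j => x (E i j)).det) =
      ∑ σ : Equiv.Perm ι, ((Equiv.Perm.sign σ : ℤ) : K) •
        ∏ i, (fun x : Module.Dual K V => x (E (σ i) i)) := by
    funext x
    rw [Matrix.det_apply]
    simp [Units.smul_def]
  rw [this]
  refine Subalgebra.sum_mem _ fun σ _ => Subalgebra.smul_mem _ (Subalgebra.prod_mem _ fun i _ => ?_) _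
  exact Algebra.subset_adjoin ⟨Module.Dual.eval K V (E (σ i) i), by funext x; rfl⟩

lemma not_mem_secant (hm : 2 ≤ m) {P : PN K m d} {ι : Type} [Fintype ι] [DecidableEq ι]
    {L : P3 K →ₗ[K] K} {c : Kˣ} (hP : c • lft (d := d) hm L = P.rep)
    (f g : ι → P3 K) (hfg : ∀ i j, (f i * g j).IsHomogeneous d)
    (hdet : (Matrix.of fun i j => L (f i * g j)).det ≠ 0) {n : ℕ} (hn : n < Fintype.card ι) :
    P ∉ secantWrt (XSet K m d) n := by
  intro hmem
  have := hmem _ (det_poly (K := K) (fun i j => ren hm (f i * g j) (hfg i j))) (by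
    rintro Q ⟨S, hS, hc, hs⟩ b
    obtain ⟨a, v, hav⟩ := (RepN.of_span hS hs).smul b
    rw [hav]
    have e : (Matrix.of fun i j => (∑ l, a l • nu d (v l)) (ren hm (f i * g j) (hfg i j))) =
      (Matrix.of fun (i : ι) (l : Fin S.card) => a l * eval (v l ∘ i3 hm) (f i)) *
      (Matrix.of fun (l : Fin S.card) (j : ι) => eval (v l ∘ i3 hm) (g j)) := by
      ext i j
      simp [Matrix.mul_apply, nu_ren, mul_assoc]
    rw [e]
    exact det_zero (by omega) _ _) ((c⁻¹ : Kˣ) : K)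
  rw [← hP, Units.smul_def, smul_smul, Units.inv_mul, one_smul] at this
  simp only [lft_ren] at this
  exact hdet this

theorem main [CharZero K] (hm : 2 ≤ m) {u k : ℕ} (hu : 1 ≤ u) (hd : 2 * u + 2 * k + 10 ≤ d) :
    (sigmaSet K m d (4 + u + k) (2 * d - 1 - u + k)).Nonempty := by
  obtain ⟨a, ha, hU⟩ := Rep.UB (K := K) hu hd
  have hpsi : (psi a u k 0 : P3 K → K) = Pf a u k := funext (psi_zero a u k)
  set φ := lft (d := d) hm (psi a u k 0) with hφ
  have hL : ∀ n, RepN n φ → 2 * d - 1 - u + k ≤ n := by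
    intro n hn
    have h := hn.desc
    rw [hpsi] at h
    have := h.LB ha hu hd
    omega
  have hφ0 : φ ≠ 0 := by
    intro h
    have := hL 0 ⟨0, fun _ => 0, by rw [h]; simp⟩
    omega
  obtain ⟨P, -, c, hP⟩ := mk_line (K := K) φ hφ0
  refine ⟨P, ?_, ?_⟩
  · obtain ⟨f, g, hfg, hdet⟩ := matrixLB (K := K) ha hd
    have h1 : P ∈ secantWrt (XSet K m d) (4 + u + k) := by
      refine mem_secant (by omega) (by omega) (N := d) (fun n => lft hm (psi a u k n)) hP ?_
      intro ε hε
      have := Rep.border a u k d hε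
      have h2 : RepN (4 + u + k) (lft (d := d) hm
          (∑ n ∈ Finset.range (d + 1), ε ^ n • psi a u k n)) := by
        apply Rep.lift
        exact this.congr (fun g _ => by simp) rfl
      convert h2 using 1
      ext h
      simp [lft_apply]
    unfold brank brankWrt
    apply le_antisymm
    · exact Nat.sInf_le ⟨by omega, h1⟩
    · refine le_csInf ⟨_, by omega, h1⟩ ?_
      rintro n ⟨-, hn⟩
      by_contra hlt
      refine not_mem_secant hm (L := psi a u k 0) hP f g hfg ?_ (n := n) ?_ hn
      · simpa only [psi_zero] using hdet
      · simp; omega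
  · refine srank_eq (by omega) hP ?_ hL
    apply Rep.lift
    rw [hpsi]; exact hU

end S18
end Assembly

/-- Step (e) of the proof of the main theorem: nonemptiness of `σ_{s,r}(X_{m,d})` for
`2d+3-s ≤ r ≤ 2d+s-7` with `r + s` odd. -/
theorem stmt18 (K : Type) [Field K] [IsAlgClosed K] [CharZero K]
    (m s d : ℕ) (hm : 2 ≤ m) (hs : 5 ≤ s) (hd : 2 * s + 2 ≤ d) :
    ∀ r : ℕ, 2 * d + 3 ≤ r + s → r + 7 ≤ 2 * d + s → (r + s) % 2 = 1 →
      (sigmaSet K m d s r).Nonempty := by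
  intro r h1 h2 h3
  obtain ⟨k, hk⟩ : ∃ k, r + s = 2 * d + 3 + 2 * k := ⟨(r + s - 2 * d - 3) / 2, by omega⟩
  obtain ⟨u, hu⟩ : ∃ u, s = 4 + u + k := ⟨s - 4 - k, by omega⟩
  have := S18.main (K := K) (d := d) hm (u := u) (k := k) (by omega) (by omega)
  rwa [← hu, show 2 * d - 1 - u + k = r by omega] at this
end
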